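/- arXiv:1510.08373 — 3 statements merged into one kernel-verified Lean document; each statement's English description precedes it below -/
import Mathlib

section
/- For every integer k ≥ 2 and every odd integer q ≥ 5 there exists N such that for all n ≥ N the following holds. Let G be a C_{k,q}-free graph on n vertices with e(G) ≥ ⌊n²/4⌋ + (k−1)² and δ(G) ≥ ⌊n/2⌋, let V(G) = V₀ ∪ V₁ be a partition maximizing the number of crossing edges e(V₀,V₁), and suppose e(V₀) + e(V₁) < n²/1600. Then max{Δ(G[V₀]), Δ(G[V₁])} = k − 1. -/
/-!
Let `S, Sᶜ` be the sides of the maximum cut and call an edge *inner* if it does not cross the cut.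
The edge bound says that the number `M` of non-adjacent crossing pairs satisfies
`M + (k - 1)² ≤ e(inner)`, up to the imbalance of the two sides, which only helps.

Call a set of vertices linked if any two of its members have many common neighbours. Inside a linked
set, paths of every short even length can be found greedily while avoiding any small set of used
vertices; closing such a path with one inner edge gives an odd cycle. So a vertex `x` of a linked set
is the centre of a `C_{k,q}` as soon as there are `k` disjoint gadgets: a neighbour of `x` in the
linked set, an edge inside the linked set, or an edge outside it with both ends suitably attached
(`LinkSet.containsCopy`).

*Upper bound.* A vertex with linearly many inner neighbours has linearly many crossing neighbours,
because the cut is maximum; most of its inner neighbours together with itself form a linked set, so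
it is a centre (`containsCopy_of_large_inner_degree`). Hence all inner degrees are below `n / 20`,
both sides of the cut are linked (`linkSet_side`), and `k` inner neighbours of one vertex already
give a `C_{k,q}`. So the inner degrees are at most `k - 1`.

*Lower bound.* Suppose all inner degrees are at most `k - 2`. There are no `k` disjoint inner edges,
as some vertex would be adjacent to all their ends on the opposite side
(`containsCopy_of_matching`). Gallai's lemma on graphs in which every vertex is missed by a maximum
matching gives `e(H) ≤ ν(H) (Δ(H) + 1)` (`sum_nb_le_of_matching`), so `e(inner) ≤ (k - 1)²`, and
therefore every crossing pair is an edge. Now take a vertex `x` of maximum inner degree `d < k - 1`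
and a maximal inner matching off the closed inner neighbourhood of `x`. If it has fewer than `k - d`
edges, then its ends and the inner neighbours of `x` cover all inner edges, so that
`e(inner) ≤ d (2 (k - 1) - d) < (k - 1)²`, a contradiction; otherwise the `d` neighbours of `x` and
the matching edges are `k` gadgets (`containsCopy_of_complete`).
-/

open SimpleGraph

section Defs

variable {V W : Type*}

/-- The set of edges of `G` with both endpoints in `S`. -/
def inEdges (G : SimpleGraph V) (S : Set V) : Set (Sym2 V) :=
  {e | e ∈ G.edgeSet ∧ ∀ v ∈ e, v ∈ S}

/-- The number of edges of `G` with both endpoints in `S`. -/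
noncomputable def edgesIn (G : SimpleGraph V) (S : Set V) : ℕ := (inEdges G S).ncard

/-- The set of edges of `G` with one endpoint in `S` and the other in `T`. -/
def crossEdges (G : SimpleGraph V) (S T : Set V) : Set (Sym2 V) :=
  {e | e ∈ G.edgeSet ∧ ∃ u ∈ S, ∃ v ∈ T, e = s(u, v)}

/-- The number of edges of `G` with one endpoint in `S` and the other in `T`. -/
noncomputable def edgesBetween (G : SimpleGraph V) (S T : Set V) : ℕ := (crossEdges G S T).ncard

/-- The matching number of a set of edges: the largest number of pairwise
vertex-disjoint edges that can be chosen from `E`. -/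
noncomputable def nuSet (E : Set (Sym2 V)) : ℕ :=
  sSup {m | ∃ M : Finset (Sym2 V), ↑M ⊆ E ∧
    (M : Set (Sym2 V)).Pairwise (fun e f => ∀ v, v ∈ e → v ∉ f) ∧ M.card = m}

/-- The matching number of a graph. -/
noncomputable def nu (G : SimpleGraph V) : ℕ := nuSet G.edgeSet

/-- `G` contains a subgraph isomorphic to `H`, i.e. there is an injective
graph homomorphism from `H` to `G`. -/
def ContainsCopy (H : SimpleGraph W) (G : SimpleGraph V) : Prop :=
  ∃ f : H →g G, Function.Injective f

/-- The Turán number `ex(n, H)`: the maximum number of edges of an `H`-free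
simple graph on `n` vertices. -/
noncomputable def exNum (n : ℕ) (H : SimpleGraph W) : ℕ :=
  sSup {m | ∃ G : SimpleGraph (Fin n), ¬ ContainsCopy H G ∧ G.edgeSet.ncard = m}

/-- Underlying relation of the graph `C_{k,q}`: the vertex `none` is the center,
and for each `i : Fin k` the vertices `(i, 0), …, (i, q-2)` together with the
center form a cycle of length `q`. -/
def CkqRel (k q : ℕ) : Option (Fin k × Fin (q - 1)) → Option (Fin k × Fin (q - 1)) → Prop
  | none, some (_, j) => (j : ℕ) = 0 ∨ (j : ℕ) = q - 2
  | some (i, j), some (i', j') => i = i' ∧ (j' : ℕ) = (j : ℕ) + 1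
  | _, _ => False

/-- The graph `C_{k,q}` on `k(q-1)+1` vertices consisting of `k` cycles of length `q`
intersecting in exactly one common vertex (the center). -/
def Ckq (k q : ℕ) : SimpleGraph (Option (Fin k × Fin (q - 1))) :=
  SimpleGraph.fromRel (CkqRel k q)

/-- The member of the family `𝓕_{n,k}`: the Turán graph `T_{n,2}` (with classes the
even- and odd-indexed vertices) together with the edges of a complete bipartite graph
`K_{k-1,k-1}` on the even vertices `0, 2, …, 2(2(k-1)-1)` added inside the even class. -/
def Fgraph (n k : ℕ) : SimpleGraph (Fin n) :=
  SimpleGraph.fromRel (fun u v =>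
    ((u : ℕ) % 2 ≠ (v : ℕ) % 2) ∨
    (∃ s t : ℕ, s < k - 1 ∧ k - 1 ≤ t ∧ t < 2 * (k - 1) ∧ (u : ℕ) = 2 * s ∧ (v : ℕ) = 2 * t))

/-- The maximum degree of the subgraph of `G` induced on `S`. -/
noncomputable def DeltaIn (G : SimpleGraph V) (S : Set V) : ℕ :=
  sSup {d | ∃ v ∈ S, d = ((G.neighborSet v) ∩ S).ncard}

/-- The degree of `x` in the subgraph of `G` induced on `S`. -/
noncomputable def degIn (G : SimpleGraph V) (S : Set V) (x : V) : ℕ :=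
  ((G.neighborSet x) ∩ S).ncard

end Defs

namespace MaxDegree
open Finset

variable {V : Type*} [Fintype V]

/-! ### Matchings and the Gallai lemma -/

open Classical in
/-- The neighbours of `v` in `G`, as a finset. -/
noncomputable def nb (G : SimpleGraph V) (v : V) : Finset V := univ.filter (G.Adj v)

theorem mem_nb {G : SimpleGraph V} {v w : V} : w ∈ nb G v ↔ G.Adj v w := by
  simp [nb]

theorem sum_nb (G : SimpleGraph V) : ∑ v, (nb G v).card = 2 * G.edgeSet.ncard := by
  classical
  have h := G.sum_degrees_eq_twice_card_edges
  rw [← SimpleGraph.coe_edgeFinset, Set.ncard_coe_finset, ← h]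
  refine Finset.sum_congr rfl fun v _ => ?_
  rw [← SimpleGraph.card_neighborFinset_eq_degree]
  congr 1
  ext w
  simp [mem_nb]

/-- A matching of `H`, encoded as the involution that swaps the two ends of every matching edge
and fixes the uncovered vertices. Its support is the set of covered vertices. -/
def IsMat (H : SimpleGraph V) (σ : Equiv.Perm V) : Prop :=
  (∀ v, σ (σ v) = v) ∧ ∀ v, σ v ≠ v → H.Adj v (σ v)

theorem IsMat.one {V : Type*} (H : SimpleGraph V) : IsMat H 1 := ⟨by simp, by simp⟩

theorem IsMat.add_edge [DecidableEq V] {H : SimpleGraph V} {σ : Equiv.Perm V} (h : IsMat H σ)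
    {u v : V} (huv : H.Adj u v) (hu : σ u = u) (hv : σ v = v) :
    IsMat H (σ * Equiv.swap u v) ∧
      (σ * Equiv.swap u v).support = insert u (insert v σ.support) := by
  obtain ⟨h1, h2⟩ := h
  have hne := huv.ne
  have key : ∀ w, (σ * Equiv.swap u v) w = if w = u then v else if w = v then u else σ w := by
    intro w
    simp only [Equiv.Perm.mul_apply, Equiv.swap_apply_def]
    split_ifs <;> simp_all
  have hinj := σ.injective
  refine ⟨⟨?_, ?_⟩, ?_⟩
  · intro w
    simp only [key]
    have := h1 w
    have hu' : σ w = u → w = u := fun e => hinj (e.trans hu.symm)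
    have hv' : σ w = v → w = v := fun e => hinj (e.trans hv.symm)
    split_ifs <;> simp_all
  · intro w hw
    rw [key] at hw ⊢
    have := huv.symm
    have := h2 w
    split_ifs at hw ⊢ <;> simp_all
  · ext w
    rw [Equiv.Perm.mem_support, key]
    simp only [Finset.mem_insert, Equiv.Perm.mem_support]
    grind

/-- The rotation step in the proof of Gallai's lemma: if `y` is uncovered by `N` and `y ~ z`, then
the edge of `N` at `z` can be exchanged for `yz`. -/
theorem IsMat.rotate [DecidableEq V] {H : SimpleGraph V} {N : Equiv.Perm V} (h : IsMat H N)
    {y z : V} (hyz : H.Adj y z) (hy : N y = y) (hz : N z ≠ z) :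
    ∃ N' : Equiv.Perm V, IsMat H N' ∧ N'.support.card = N.support.card ∧
      N' y = z ∧ N' z = y ∧ N' (N z) = N z ∧ ∀ v, v ≠ y → v ≠ z → v ≠ N z → N' v = N v := by
  obtain ⟨h1, h2⟩ := h
  have hne := hyz.ne
  have hty : N z ≠ y := by
    intro e
    have := h1 z
    rw [e, hy] at this
    exact hne this
  have hinj := N.injective
  have hNt := h1 z
  obtain ⟨t, ht⟩ : ∃ t, t = N z := ⟨_, rfl⟩
  rw [← ht] at hNt hz hty ⊢
  have key : ∀ w, (N * Equiv.swap z t * Equiv.swap y z) w =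
      if w = y then z else if w = z then y else if w = t then t else N w := by
    intro w
    simp only [Equiv.Perm.mul_apply, Equiv.swap_apply_def]
    grind
  have hu' : ∀ w, N w = y → w = y := fun w e => hinj (e.trans hy.symm)
  have hv' : ∀ w, N w = z → w = t := fun w e => hinj (e.trans hNt.symm)
  have hw' : ∀ w, N w = t → w = z := fun w e => hinj (e.trans ht)
  refine ⟨N * Equiv.swap z t * Equiv.swap y z, ⟨?_, ?_⟩, ?_, ?_⟩
  · intro w
    simp only [key]
    have := h1 w
    have := hu' w
    have := hv' w
    have := hw' w
    grind
  · intro w hw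
    rw [key] at hw ⊢
    have := hyz.symm
    have := h2 w
    grind
  · have : (N * Equiv.swap z t * Equiv.swap y z).support = insert y (N.support.erase t) := by
      ext w
      rw [Equiv.Perm.mem_support, key]
      simp only [Finset.mem_insert, Finset.mem_erase, Equiv.Perm.mem_support]
      grind
    rw [this, Finset.card_insert_of_notMem (by simp [hy]), Finset.card_erase_of_mem
      (by simp only [Equiv.Perm.mem_support, hNt]; exact hz.symm)]
    have : 0 < N.support.card := Finset.card_pos.2 ⟨z, by simp [← ht, hz]⟩
    omega
  · simp only [key]
    refine ⟨by simp, by simp [hne.symm], by simp [hz, hty], ?_⟩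
    intro v a b c
    simp [a, b, c]

/-- `u` and `v` are equal, or no matching covering exactly `s` vertices misses both. -/
def Linked (H : SimpleGraph V) (s : ℕ) (u v : V) : Prop :=
  u = v ∨ ∀ σ : Equiv.Perm V, IsMat H σ → (open Classical in σ.support.card) = s →
    ¬ (σ u = u ∧ σ v = v)

theorem Linked.symm {H : SimpleGraph V} {s : ℕ} {u v : V} (h : Linked H s u v) :
    Linked H s v u := by
  rcases h with h | h
  · exact Or.inl h.symm
  · exact Or.inr fun σ a b c => h σ a b ⟨c.2, c.1⟩

/-- Gallai's lemma: if every vertex is missed by some maximum matching, then the relation `Linked`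
is transitive. -/
theorem Linked.trans {H : SimpleGraph V} {s : ℕ}
    (hmax : ∀ σ : Equiv.Perm V, IsMat H σ → (open Classical in σ.support.card) ≤ s)
    (hmiss : ∀ v, ∃ σ : Equiv.Perm V, IsMat H σ ∧ (open Classical in σ.support.card) = s ∧ σ v = v)
    {u w v : V} (huw : Linked H s u w) (hwv : Linked H s w v) : Linked H s u v := by
  classical
  rcases huw with rfl | huw
  · exact hwv
  rcases hwv with rfl | hwv
  · exact Or.inr huw
  by_cases huv : u = v
  · exact Or.inl huv
  refine Or.inr fun M hM hMs ⟨hMu, hMv⟩ => ?_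
  have hMw : M w ≠ w := fun e => huw M hM (by convert hMs) ⟨hMu, e⟩
  -- a maximum matching missing `w` and agreeing with `M` as often as possible
  obtain ⟨N, hN, hNmax⟩ := Finset.exists_max_image
    (univ.filter fun N : Equiv.Perm V => IsMat H N ∧ N.support.card = s ∧ N w = w)
    (fun N => (univ.filter fun v => M v = N v).card)
    (by
      obtain ⟨σ, h1, h2, h3⟩ := hmiss w
      exact ⟨σ, by simp only [mem_filter, mem_univ, true_and]; exact ⟨h1, by convert h2, h3⟩⟩)
  simp only [mem_filter, mem_univ, true_and] at hN hNmax
  obtain ⟨hN, hNs, hNw⟩ := hN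
  have hNu : N u ≠ u := fun e => huw N hN (by convert hNs) ⟨e, hNw⟩
  have hNv : N v ≠ v := fun e => hwv N hN (by convert hNs) ⟨hNw, e⟩
  have hcard : (N.support \ M.support).card = (M.support \ N.support).card := by
    have h1 := Finset.card_sdiff_add_card_inter N.support M.support
    have h2 := Finset.card_sdiff_add_card_inter M.support N.support
    rw [Finset.inter_comm] at h2
    have : M.support.card = s := by convert hMs
    omega
  have h2 : 1 < (M.support \ N.support).card := by
    rw [← hcard, Finset.one_lt_card]
    exact ⟨u, by simp [hNu, hMu], v, by simp [hNv, hMv], huv⟩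
  obtain ⟨y, hy, hyw⟩ := Finset.exists_mem_ne h2 w
  simp only [mem_sdiff, Equiv.Perm.mem_support, not_not] at hy
  obtain ⟨hMy, hNy⟩ := hy
  have hadj := hM.2 y hMy
  have hNz : N (M y) ≠ M y := by
    intro e
    obtain ⟨a, b⟩ := hN.add_edge hadj hNy e
    have := hmax _ a
    have h3 : (N * Equiv.swap y (M y)).support.card ≤ s := by convert this
    rw [b, Finset.card_insert_of_notMem (by simp [hNy, hMy.symm]),
      Finset.card_insert_of_notMem (by simp [e])] at h3
    omega
  obtain ⟨N', hN', hc, e1, e2, e3, e4⟩ := hN.rotate hadj hNy hNz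
  have hN'w : N' w = w := by
    by_cases h1 : w = M y
    · rw [← h1] at hNz; exact absurd hNw hNz
    by_cases h2 : w = N (M y)
    · rw [h2]; exact e3
    · rw [e4 w hyw.symm h1 h2, hNw]
  have hle := hNmax N' ⟨hN', hc.trans hNs, hN'w⟩
  refine absurd hle (not_le.2 (Finset.card_lt_card ?_))
  rw [Finset.ssubset_iff_of_subset]
  · exact ⟨y, by simp [e1], by simp [hNy, hMy]⟩
  · intro a ha
    simp only [mem_filter, mem_univ, true_and] at ha ⊢
    by_cases h0 : a = y
    · rw [h0, e1]
    by_cases h1 : a = M y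
    · rw [h1, e2]; exact hM.1 y
    by_cases h2 : a = N (M y)
    · exfalso
      have h3 : M a = M y := by rw [ha, h2]; exact hN.1 _
      exact h0 (M.injective h3)
    · rw [e4 a h0 h1 h2, ha]

theorem class_bound (a d c : ℕ) (S : ℕ) (hc : c ≤ a + 1) (hac : a ≤ c) (h1 : S ≤ c * d)
    (h2 : S ≤ c * (c - 1)) : S ≤ a * (d + 1) := by
  rcases Nat.lt_or_ge a c with h | h
  · obtain rfl : c = a + 1 := by omega
    simp only [Nat.add_sub_cancel] at h2
    rcases le_total a d with h3 | h3 <;> nlinarith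
  · obtain rfl : c = a := by omega
    nlinarith

/-- If every matching of `H` has at most `s` edges and every degree is at most `d`, then `H` has at
most `s * (d + 1)` edges. A vertex covered by every maximum matching can be deleted; in the absence
of such a vertex, Gallai's lemma splits `H` into pieces in each of which a maximum matching
misses at most one vertex. -/
theorem sum_nb_le_of_matching (d s : ℕ) (H : SimpleGraph V) (hd : ∀ v, (nb H v).card ≤ d)
    (hs : ∀ σ : Equiv.Perm V, IsMat H σ → (open Classical in σ.support.card) ≤ 2 * s) :
    ∑ v, (nb H v).card ≤ 2 * s * (d + 1) := by
  classical
  induction s generalizing H with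
  | zero =>
    simp only [Nat.mul_zero, Nat.zero_mul, Nat.le_zero, Finset.sum_eq_zero_iff, Finset.mem_univ,
      Finset.card_eq_zero, true_implies]
    intro v
    rw [Finset.eq_empty_iff_forall_notMem]
    intro w hw
    rw [mem_nb] at hw
    obtain ⟨a, b⟩ := (IsMat.one H).add_edge hw rfl rfl
    have := hs _ a
    have h3 : (1 * Equiv.swap v w).support.card ≤ 2 * 0 := by convert this
    rw [b] at h3
    simp at h3
  | succ s ih =>
    by_cases hv : ∃ v, ∀ σ : Equiv.Perm V, IsMat H σ → σ v = v → σ.support.card < 2 * (s + 1)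
    · obtain ⟨v, hv⟩ := hv
      let H' : SimpleGraph V :=
        { Adj := fun a b => H.Adj a b ∧ a ≠ v ∧ b ≠ v
          symm := ⟨fun a b h => ⟨h.1.symm, h.2.2, h.2.1⟩⟩
          loopless := ⟨fun a h => H.loopless.irrefl a h.1⟩ }
      have h1 := ih H' (fun w => le_trans (Finset.card_le_card (fun z hz => by
        rw [mem_nb] at hz ⊢; exact hz.1)) (hd w)) (by
        intro σ hσ
        have hfix : σ v = v := by
          by_contra hne
          exact (hσ.2 v hne).2.1 rfl
        have h2 := hv σ ⟨hσ.1, fun w hw => (hσ.2 w hw).1⟩ hfix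
        have h3 : 2 ∣ σ.support.card := Equiv.Perm.two_dvd_card_support (by
          ext w; simp [sq, hσ.1 w])
        have h4 : σ.support.card ≤ 2 * s := by omega
        convert h4)
      have h2 : ∀ w, (nb H w).card ≤ (nb H' w).card + ((if w = v then (nb H v).card else 0) +
          if w ∈ nb H v then 1 else 0) := by
        intro w
        by_cases hw : w = v
        · subst hw; simp; omega
        · by_cases hw' : w ∈ nb H v
          · simp only [hw, hw', if_true, if_false]
            have : nb H w ⊆ insert v (nb H' w) := by
              intro z hz
              rw [mem_nb] at hz
              simp only [mem_insert, mem_nb]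
              by_cases hzv : z = v
              · exact Or.inl hzv
              · exact Or.inr ⟨hz, hw, hzv⟩
            have := (Finset.card_le_card this).trans (Finset.card_insert_le _ _)
            omega
          · simp only [hw, hw', if_false]
            refine Finset.card_le_card fun z hz => ?_
            rw [mem_nb] at hz ⊢
            refine ⟨hz, hw, ?_⟩
            rintro rfl
            exact hw' (mem_nb.2 hz.symm)
      have h3 := Finset.sum_le_sum (s := univ) fun w _ => h2 w
      rw [Finset.sum_add_distrib, Finset.sum_add_distrib] at h3
      simp only [Finset.sum_ite_eq', Finset.mem_univ, if_true, Finset.sum_ite_mem,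
        Finset.univ_inter, Finset.sum_const, smul_eq_mul, mul_one] at h3
      have h4 := hd v
      nlinarith
    · push Not at hv
      have hmax : ∀ σ : Equiv.Perm V, IsMat H σ →
          (open Classical in σ.support.card) ≤ 2 * (s + 1) := hs
      have hmiss : ∀ v, ∃ σ : Equiv.Perm V, IsMat H σ ∧
          (open Classical in σ.support.card) = 2 * (s + 1) ∧ σ v = v := by
        intro v
        obtain ⟨σ, a, b, c⟩ := hv v
        exact ⟨σ, a, le_antisymm (hs σ a) (by convert c), b⟩
      have htrans := @Linked.trans V _ H _ hmax hmiss
      by_cases hV : Nonempty V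
      swap
      · rw [not_nonempty_iff] at hV
        simp
      obtain ⟨M, hM, hMs, -⟩ := hmiss hV.some
      have hadj : ∀ u v, H.Adj u v → Linked H (2 * (s + 1)) u v := by
        intro u v huv
        refine Or.inr fun σ hσ hσs ⟨h1, h2⟩ => ?_
        obtain ⟨a, b⟩ := hσ.add_edge huv h1 h2
        have h3 : (σ * Equiv.swap u v).support.card ≤ 2 * (s + 1) := by convert hs _ a
        rw [b, Finset.card_insert_of_notMem (by simp [h1, huv.ne]),
          Finset.card_insert_of_notMem (by simp [h2])] at h3
        have : σ.support.card = 2 * (s + 1) := by convert hσs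
        omega
      let cls : V → Finset V := fun v => univ.filter (Linked H (2 * (s + 1)) v)
      have hcls : ∀ u v, Linked H (2 * (s + 1)) u v → cls u = cls v := by
        intro u v h
        ext z
        simp only [cls, mem_filter, mem_univ, true_and]
        exact ⟨fun h' => htrans h.symm h', fun h' => htrans h h'⟩
      have hcls' : ∀ u v, cls u = cls v → Linked H (2 * (s + 1)) u v := by
        intro u v h
        have : v ∈ cls v := by simp [cls, Linked]
        rw [← h] at this
        simpa [cls] using this
      have hsum : M.support.card = ∑ v, if M v ≠ v then 1 else 0 := by
        rw [← Finset.card_filter]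
        rfl
      have hgoal : ∑ v, (nb H v).card ≤ M.support.card * (d + 1) := by
        rw [hsum, ← Finset.sum_fiberwise univ cls, ← Finset.sum_fiberwise univ cls, Finset.sum_mul]
        refine Finset.sum_le_sum fun C _ => ?_
        rw [← Finset.card_filter]
        refine class_bound _ d (univ.filter fun v => cls v = C).card _ ?_
          (Finset.card_le_card (Finset.filter_subset _ _)) ?_ ?_
        · rw [← Finset.card_filter_add_card_filter_not (s := univ.filter fun v => cls v = C)
            (p := fun v => M v ≠ v)]
          refine Nat.add_le_add_left (Finset.card_le_one.2 ?_) _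
          intro a ha b hb
          simp only [mem_filter, mem_univ, true_and, not_not] at ha hb
          rcases hcls' a b (ha.1.trans hb.1.symm) with h | h
          · exact h
          · exact absurd ⟨ha.2, hb.2⟩ (h M hM hMs)
        · exact Finset.sum_le_card_nsmul _ _ _ fun v _ => hd v
        · refine Finset.sum_le_card_nsmul _ _ _ fun v hv => ?_
          rw [← Finset.card_erase_of_mem hv]
          refine Finset.card_le_card fun w hw => ?_
          rw [mem_nb] at hw
          simp only [mem_filter, mem_univ, true_and, mem_erase] at hv ⊢
          exact ⟨hw.ne', (hcls _ _ (hadj _ _ hw)).symm.trans hv⟩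
      have h5 : M.support.card = 2 * (s + 1) := by convert hMs
      rwa [h5] at hgoal

/-! ### Greedy embedding of `C_{k,q}` -/

/-- There is a cycle of length `q` through `x` none of whose other vertices lies in `F`; the cycle
is presented as a path of length `q - 1` from a neighbour of `x` back to `x`. -/
def CycAvoid (G : SimpleGraph V) (x : V) (q : ℕ) (F : Finset V) : Prop :=
  ∃ y, ∃ p : G.Walk y x, G.Adj x y ∧ p.IsPath ∧ p.length = q - 1 ∧
    ∀ v ∈ p.support, v ≠ x → v ∉ F

/-- The vertices `c 0, …, c (q - 2)`, in this order, close up to a cycle of length `q` through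
`x`. -/
def IsCyc (G : SimpleGraph V) (x : V) (q : ℕ) (c : ℕ → V) : Prop :=
  G.Adj x (c 0) ∧ G.Adj x (c (q - 2)) ∧ (∀ j, j + 1 < q - 1 → G.Adj (c j) (c (j + 1))) ∧
    (∀ i < q - 1, ∀ j < q - 1, c i = c j → i = j) ∧ ∀ j < q - 1, c j ≠ x

theorem CycAvoid.exists_isCyc {V : Type*} {G : SimpleGraph V} {x : V} {q : ℕ} {F : Finset V}
    (hq : 5 ≤ q) (h : CycAvoid G x q F) : ∃ c, IsCyc G x q c ∧ ∀ j < q - 1, c j ∉ F := by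
  obtain ⟨y, p, h1, h2, h3, h4⟩ := h
  have hinj : ∀ i ≤ q - 1, ∀ j ≤ q - 1, p.getVert i = p.getVert j → i = j := fun i hi j hj e =>
    h2.getVert_injOn (by rw [Set.mem_ofPred_eq]; omega) (by rw [Set.mem_ofPred_eq]; omega) e
  have hlast : p.getVert (q - 1) = x := by rw [← h3, SimpleGraph.Walk.getVert_length]
  have hne : ∀ j < q - 1, p.getVert j ≠ x := by
    intro j hj e
    have := hinj j hj.le (q - 1) le_rfl (by rw [e, hlast])
    omega
  refine ⟨p.getVert, ⟨by simpa using h1, ?_, fun j hj => p.adj_getVert_succ (by omega),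
    fun i hi j hj => hinj i hi.le j hj.le, hne⟩,
    fun j hj => h4 _ (p.getVert_mem_support j) (hne j hj)⟩
  have := p.adj_getVert_succ (i := q - 2) (by omega)
  rw [show q - 2 + 1 = q - 1 by omega, hlast] at this
  exact this.symm

/-- Disjoint gadgets `S i`, each of which extends to a cycle of length `q` through `x` avoiding any
prescribed small set disjoint from `S i`, can be completed greedily to a copy of `C_{k,q}`
centred at `x`. -/
theorem containsCopy_of_gadgets {V : Type*} {k q : ℕ} (hq : 5 ≤ q) (G : SimpleGraph V) (x : V)
    (S : Fin k → Finset V) (hcard : ∀ i, (S i).card ≤ 2)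
    (hdisj : ∀ i j, i ≠ j → Disjoint (S i) (S j))
    (h : ∀ i F, F.card ≤ k * (q + 1) → Disjoint F (S i) → CycAvoid G x q F) :
    ContainsCopy (Ckq k q) G := by
  classical
  have step : ∀ t : Finset (Fin k), ∃ c : Fin k → ℕ → V, ∀ i ∈ t, IsCyc G x q (c i) ∧
      (∀ l < q - 1, ∀ j ∉ t, c i l ∉ S j) ∧
      ∀ j ∈ t, j ≠ i → ∀ l < q - 1, ∀ m < q - 1, c i l ≠ c j m := by
    intro t
    induction t using Finset.induction_on with
    | empty => exact ⟨fun _ _ => x, by simp⟩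
    | insert a t ha ih =>
      obtain ⟨c, hc⟩ := ih
      -- the new cycle avoids the old ones and the gadgets of later ones
      let T : Fin k → Finset V := fun i =>
        if i ∈ t then (range (q - 1)).image (c i) else if i = a then ∅ else S i
      have hT : ∀ i, (T i).card ≤ q + 1 := by
        intro i
        simp only [T]
        split_ifs with h1 h2
        · have := Finset.card_image_le (s := range (q - 1)) (f := c i)
          rw [Finset.card_range] at this
          omega
        · simp
        · have := hcard i; omega
      obtain ⟨c', hc', hav⟩ := (h a (univ.biUnion T) (by
        refine (Finset.card_biUnion_le_card_mul _ _ _ fun i _ => hT i).trans ?_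
        simp) (by
        rw [Finset.disjoint_left]
        intro v hv hva
        rw [Finset.mem_biUnion] at hv
        obtain ⟨i, -, hi⟩ := hv
        simp only [T] at hi
        split_ifs at hi with h1 h2
        · rw [Finset.mem_image] at hi
          obtain ⟨l, hl, rfl⟩ := hi
          exact (hc i h1).2.1 l (Finset.mem_range.1 hl) a ha hva
        · simp at hi
        · exact Finset.disjoint_left.1 (hdisj i a h2) hi hva)).exists_isCyc hq
      have hav' : ∀ l < q - 1, ∀ i, c' l ∉ T i := fun l hl i hi =>
        hav l hl (Finset.mem_biUnion.2 ⟨i, Finset.mem_univ _, hi⟩)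
      have hcross : ∀ j ∈ t, ∀ l < q - 1, ∀ m < q - 1, c' l ≠ c j m := by
        intro j hj l hl m hm e
        refine hav' l hl j ?_
        simp only [T, hj, if_true]
        exact Finset.mem_image.2 ⟨m, Finset.mem_range.2 hm, e.symm⟩
      refine ⟨Function.update c a c', ?_⟩
      intro i hi
      by_cases hia : i = a
      · subst hia
        rw [Function.update_self]
        refine ⟨hc', ?_, ?_⟩
        · intro l hl j hj hvj
          rw [Finset.mem_insert, not_or] at hj
          refine hav' l hl j ?_
          simpa only [T, hj.2, if_false, hj.1] using hvj
        · intro j hj hji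
          rw [Function.update_of_ne hji]
          exact hcross j (Finset.mem_of_mem_insert_of_ne hj hji)
      · have hi' := Finset.mem_of_mem_insert_of_ne hi hia
        obtain ⟨g1, g2, g3⟩ := hc i hi'
        rw [Function.update_of_ne hia]
        refine ⟨g1, fun l hl j hj => g2 l hl j fun hjt => hj (Finset.mem_insert_of_mem hjt), ?_⟩
        intro j hj hji l hl m hm
        by_cases hja : j = a
        · subst hja
          rw [Function.update_self]
          exact (hcross i hi' m hm l hl).symm
        · rw [Function.update_of_ne hja]
          exact g3 j (Finset.mem_of_mem_insert_of_ne hj hja) hji l hl m hm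
  obtain ⟨c, hc⟩ := step univ
  replace hc := fun i => hc i (Finset.mem_univ i)
  let f : Option (Fin k × Fin (q - 1)) → V := fun o => match o with
    | none => x
    | some (i, j) => c i j
  have hrel : ∀ a b, CkqRel k q a b → G.Adj (f a) (f b) := by
    rintro (_ | ⟨i, j⟩) (_ | ⟨i', j'⟩) hab
    · exact hab.elim
    · obtain ⟨⟨h1, h2, -⟩, -⟩ := hc i'
      simp only [f]
      rcases hab with hab | hab
      · rw [hab]; exact h1
      · rw [hab]; exact h2
    · exact hab.elim
    · obtain ⟨rfl, hj⟩ := hab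
      obtain ⟨⟨-, -, h3, -⟩, -⟩ := hc i
      simp only [f]
      rw [hj]
      exact h3 j (by omega)
  refine ⟨⟨f, ?_⟩, ?_⟩
  · intro a b hab
    rw [Ckq, SimpleGraph.fromRel_adj] at hab
    rcases hab.2 with h1 | h1
    · exact hrel _ _ h1
    · exact (hrel _ _ h1).symm
  · rintro (_ | ⟨i, j⟩) (_ | ⟨i', j'⟩) hab
    · rfl
    · exact absurd hab.symm ((hc i').1.2.2.2.2 j' j'.2)
    · exact absurd hab ((hc i).1.2.2.2.2 j j.2)
    · change c i j = c i' j' at hab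
      by_cases hii : i = i'
      · subst hii
        rw [Fin.ext ((hc i).1.2.2.2.1 j j.2 j' j'.2 hab)]
      · exact absurd hab ((hc i).2.2 i' (Finset.mem_univ _) (Ne.symm hii) j j.2 j' j'.2)

open Classical in
/-- A set of at least `K` vertices any two of which have at least `K` common neighbours. -/
def LinkSet (G : SimpleGraph V) (K : ℕ) (L : Finset V) : Prop :=
  K ≤ L.card ∧ ∀ u ∈ L, ∀ v ∈ L, u ≠ v → K ≤ (nb G u ∩ nb G v).card

theorem exists_fresh {V : Type*} {A F : Finset V} (h : F.card < A.card) : ∃ a ∈ A, a ∉ F := by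
  by_contra hc
  push Not at hc
  exact absurd (Finset.card_le_card hc) (not_le.2 h)

/-- Two vertices of a linked set are joined by paths of every small even length, avoiding any
small set. -/
theorem LinkSet.exists_path {G : SimpleGraph V} {K : ℕ} {L : Finset V} (hL : LinkSet G K L)
    (r : ℕ) (F : Finset V) (u w : V) (hF : F.card + 2 * r + 3 ≤ K) (hu : u ∈ L) (hw : w ∈ L)
    (huw : u ≠ w) (huF : u ∉ F) :
    ∃ p : G.Walk u w, p.IsPath ∧ p.length = 2 * (r + 1) ∧ ∀ v ∈ p.support, v ≠ w → v ∉ F := by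
  classical
  induction r generalizing F u with
  | zero =>
    obtain ⟨b, hb, hbF⟩ := exists_fresh (A := nb G u ∩ nb G w) (F := F) (by
      have := hL.2 u hu w hw huw
      have : K ≤ (nb G u ∩ nb G w).card := by convert this
      omega)
    simp only [mem_inter, mem_nb] at hb
    refine ⟨.cons hb.1 (.cons hb.2.symm .nil), ?_, rfl, ?_⟩
    · simp [SimpleGraph.Walk.cons_isPath_iff, hb.2.ne', hb.1.ne, huw]
    · simp [huF, hbF]
  | succ r ih =>
    obtain ⟨a, ha, haF⟩ := exists_fresh (A := L) (F := insert u (insert w F)) (by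
      have := hL.1
      have := Finset.card_insert_le u (insert w F)
      have := Finset.card_insert_le w F
      omega)
    simp only [mem_insert, not_or] at haF
    obtain ⟨b, hb, hbF⟩ := exists_fresh (A := nb G u ∩ nb G a) (F := insert w F) (by
      have := hL.2 u hu a ha (Ne.symm haF.1)
      have : K ≤ (nb G u ∩ nb G a).card := by convert this
      have := Finset.card_insert_le w F
      omega)
    simp only [mem_inter, mem_nb, mem_insert, not_or] at hb hbF
    obtain ⟨p, hp, hlen, hav⟩ := ih (insert u (insert b F)) a (by
      have := Finset.card_insert_le u (insert b F)
      have := Finset.card_insert_le b F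
      omega) ha haF.2.1 (by simp [haF.1, haF.2.2, hb.2.ne])
    refine ⟨.cons hb.1 (.cons hb.2.symm p), ?_, by simp [hlen]; omega, ?_⟩
    · have h1 : u ∉ p.support := fun h => hav u h huw (by simp)
      have h2 : b ∉ p.support := fun h => hav b h hbF.1 (by simp)
      simp [SimpleGraph.Walk.cons_isPath_iff, hp, h1, h2, hb.1.ne]
    · intro v hv hvw
      simp only [SimpleGraph.Walk.support_cons, List.mem_cons] at hv
      rcases hv with rfl | rfl | hv
      · exact huF
      · exact hbF.2
      · have := hav v hv hvw
        simp only [mem_insert, not_or] at this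
        exact this.2.2

/-- A cycle through `x` using an edge `xy` inside the linked set. -/
theorem LinkSet.cyc_star {G : SimpleGraph V} {K : ℕ} {L : Finset V} (hL : LinkSet G K L)
    {q : ℕ} (hq : 5 ≤ q) (hodd : Odd q) {x y : V} (hx : x ∈ L) (hy : y ∈ L) (hxy : G.Adj x y)
    (F : Finset V) (hF : F.card + q + 5 ≤ K) (hyF : y ∉ F) : CycAvoid G x q F := by
  obtain ⟨h, rfl⟩ := hodd
  obtain ⟨p, h1, h2, h3⟩ := hL.exists_path (h - 1) F y x (by omega) hy hx hxy.ne' hyF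
  exact ⟨y, p, hxy, h1, by omega, h3⟩

/-- A cycle through `x` using an edge `yz` inside the linked set of `x` but away from `x`. -/
theorem LinkSet.cyc_edge {G : SimpleGraph V} {K : ℕ} {L : Finset V} (hL : LinkSet G K L)
    {q : ℕ} (hq : 5 ≤ q) (hodd : Odd q) {x y z : V} (hx : x ∈ L) (hy : y ∈ L) (hz : z ∈ L)
    (hyz : G.Adj y z) (hyx : y ≠ x) (hzx : z ≠ x)
    (F : Finset V) (hF : F.card + q + 5 ≤ K) (hyF : y ∉ F) (hzF : z ∉ F) : CycAvoid G x q F := by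
  classical
  obtain ⟨h, rfl⟩ := hodd
  obtain ⟨u, hu, huF⟩ := exists_fresh (A := nb G x ∩ nb G y) (F := insert z F) (by
      have := hL.2 x hx y hy hyx.symm
      have : K ≤ (nb G x ∩ nb G y).card := by convert this
      have := Finset.card_insert_le z F
      omega)
  simp only [mem_inter, mem_nb, mem_insert, not_or] at hu huF
  obtain ⟨p, h1, h2, h3⟩ := hL.exists_path (h - 2) (insert u (insert y F)) z x (by
    have := Finset.card_insert_le u (insert y F)
    have := Finset.card_insert_le y F
    omega) hz hx hzx (by simp [hzF, hyz.ne', Ne.symm huF.1])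
  refine ⟨u, .cons hu.2.symm (.cons hyz p), hu.1, ?_, by simp [h2]; omega, ?_⟩
  · have h4 : u ∉ p.support := fun h => h3 u h hu.1.ne' (by simp)
    have h5 : y ∉ p.support := fun h => h3 y h hyx (by simp)
    simp [SimpleGraph.Walk.cons_isPath_iff, h1, h4, h5, hu.2.ne']
  · intro v hv hvw
    simp only [SimpleGraph.Walk.support_cons, List.mem_cons] at hv
    rcases hv with rfl | rfl | hv
    · exact huF.2
    · exact hyF
    · have := h3 v hv hvw
      simp only [mem_insert, not_or] at this
      exact this.2.2

open Classical in
/-- A cycle through `x` using an edge `yz` outside the linked set, where `y` is adjacent to `x` and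
`z` has many neighbours in the linked set. -/
theorem LinkSet.cyc_opp {G : SimpleGraph V} {K : ℕ} {L : Finset V} (hL : LinkSet G K L)
    {q : ℕ} (hq : 5 ≤ q) (hodd : Odd q) {x y z : V} (hx : x ∈ L) (hxy : G.Adj x y)
    (hyz : G.Adj y z) (hzx : z ≠ x) (hz : K ≤ (nb G z ∩ L).card)
    (F : Finset V) (hF : F.card + q + 5 ≤ K) (hyF : y ∉ F) (hzF : z ∉ F) : CycAvoid G x q F := by
  obtain ⟨h, rfl⟩ := hodd
  obtain ⟨w, hw, hwF⟩ := exists_fresh (A := nb G z ∩ L) (F := insert x (insert y F)) (by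
      have := Finset.card_insert_le x (insert y F)
      have := Finset.card_insert_le y F
      omega)
  simp only [mem_inter, mem_nb, mem_insert, not_or] at hw hwF
  obtain ⟨p, h1, h2, h3⟩ := hL.exists_path (h - 2) (insert y (insert z F)) w x (by
    have := Finset.card_insert_le y (insert z F)
    have := Finset.card_insert_le z F
    omega) hw.2 hx hwF.1 (by simp [hwF.2.1, hwF.2.2, hw.1.ne'])
  refine ⟨y, .cons hyz (.cons hw.1 p), hxy, ?_, by simp [h2]; omega, ?_⟩
  · have h4 : y ∉ p.support := fun h => h3 y h hxy.ne' (by simp)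
    have h5 : z ∉ p.support := fun h => h3 z h hzx (by simp)
    simp [SimpleGraph.Walk.cons_isPath_iff, h1, h4, h5, hyz.ne]
  · intro v hv hvw
    simp only [SimpleGraph.Walk.support_cons, List.mem_cons] at hv
    rcases hv with rfl | rfl | hv
    · exact hyF
    · exact hzF
    · have := h3 v hv hvw
      simp only [mem_insert, not_or] at this
      exact this.2.2

/-! ### Inner and crossing edges of a cut -/

/-- The edges of `G` that do not cross the cut `(S, Sᶜ)`. -/
def inner (G : SimpleGraph V) (S : Finset V) : SimpleGraph V where
  Adj u v := G.Adj u v ∧ (u ∈ S ↔ v ∈ S)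
  symm := ⟨fun _ _ h => ⟨h.1.symm, h.2.symm⟩⟩
  loopless := ⟨fun a h => G.loopless.irrefl a h.1⟩

/-- The edges of `G` that cross the cut `(S, Sᶜ)`. -/
def cross (G : SimpleGraph V) (S : Finset V) : SimpleGraph V where
  Adj u v := G.Adj u v ∧ ¬ (u ∈ S ↔ v ∈ S)
  symm := ⟨fun _ _ h => ⟨h.1.symm, fun h' => h.2 h'.symm⟩⟩
  loopless := ⟨fun a h => G.loopless.irrefl a h.1⟩

open Classical in
/-- The vertices on the other side of the cut `(S, Sᶜ)` not adjacent to `x`. -/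
noncomputable def missing (G : SimpleGraph V) (S : Finset V) (x : V) : Finset V :=
  univ.filter fun y => ¬ (x ∈ S ↔ y ∈ S) ∧ ¬ G.Adj x y

theorem inner_compl {V : Type*} (G : SimpleGraph V) {S T : Finset V} (hST : ∀ v, v ∈ T ↔ v ∉ S) :
    inner G T = inner G S := by
  ext u v
  simp only [inner, hST]
  tauto

theorem cross_compl {V : Type*} (G : SimpleGraph V) {S T : Finset V} (hST : ∀ v, v ∈ T ↔ v ∉ S) :
    cross G T = cross G S := by
  ext u v
  simp only [cross, hST]
  tauto

theorem card_add_card_compl {S T : Finset V} (hST : ∀ v, v ∈ T ↔ v ∉ S) :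
    S.card + T.card = Fintype.card V := by
  classical
  have : T = Sᶜ := by ext v; simp [hST]
  rw [this, Finset.card_add_card_compl]

theorem nb_inner_add_nb_cross (G : SimpleGraph V) (S : Finset V) (x : V) :
    (nb G x).card = (nb (inner G S) x).card + (nb (cross G S) x).card := by
  classical
  rw [← Finset.card_filter_add_card_filter_not (s := nb G x) (p := fun y => x ∈ S ↔ y ∈ S)]
  congr 2 <;> (ext y; simp [mem_nb, inner, cross])

theorem nb_cross_add_missing (G : SimpleGraph V) {S T : Finset V} (hST : ∀ v, v ∈ T ↔ v ∉ S)
    {x : V} (hx : x ∈ S) : (nb (cross G S) x).card + (missing G S x).card = T.card := by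
  classical
  rw [← Finset.card_filter_add_card_filter_not (s := T) (p := fun y => G.Adj x y)]
  congr 2
  · ext y; simp [mem_nb, cross, hST, hx, and_comm]
  · ext y; simp [missing, hST, hx]

theorem sum_nb_cross (G : SimpleGraph V) {S T : Finset V} (hST : ∀ v, v ∈ T ↔ v ∉ S) :
    ∑ x ∈ S, (nb (cross G S) x).card = (cross G S).edgeSet.ncard := by
  classical
  have hb : (cross G S).IsBipartiteWith (S : Set V) (T : Set V) := by
    refine ⟨?_, ?_⟩
    · rw [Set.disjoint_left]
      intro a ha hb
      exact (hST a).1 (by simpa using hb) (by simpa using ha)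
    · intro u v huv
      have := huv.2
      simp only [Finset.mem_coe, hST]
      tauto
  have h := SimpleGraph.isBipartiteWith_sum_degrees_eq_card_edges hb
  rw [← SimpleGraph.coe_edgeFinset, Set.ncard_coe_finset, ← h]
  refine Finset.sum_congr rfl fun v _ => ?_
  rw [← SimpleGraph.card_neighborFinset_eq_degree]
  congr 1
  ext w
  simp [mem_nb]

theorem sum_missing (G : SimpleGraph V) {S T : Finset V} (hST : ∀ v, v ∈ T ↔ v ∉ S) :
    (cross G S).edgeSet.ncard + ∑ x ∈ S, (missing G S x).card = S.card * T.card := by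
  rw [← sum_nb_cross G hST, ← Finset.sum_add_distrib,
    Finset.sum_congr rfl fun x hx => nb_cross_add_missing G hST hx]
  simp

/-! ### Gadgets relative to a cut -/

/-- The size, in terms of `k` and `q`, that a linked set needs for the greedy embedding of
`C_{k,q}`. -/
def linkSize (k q : ℕ) : ℕ := k * (q + 1) + q + 5

open Classical in
/-- A vertex `x` of a linked set is the centre of a `C_{k,q}` as soon as there are `k` disjoint
gadgets `{y, σ y}`, each being a neighbour of `x` in the linked set, an edge in the linked set, or
an edge outside the linked set meeting the neighbourhood of `x`. -/
theorem LinkSet.containsCopy {G : SimpleGraph V} {k q : ℕ} {L : Finset V}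
    (hL : LinkSet G (linkSize k q) L) (hq : 5 ≤ q) (hodd : Odd q) {x : V} (hx : x ∈ L)
    (σ : Equiv.Perm V) (Y : Finset V) (hY : k ≤ Y.card)
    (hxY : ∀ y ∈ Y, y ≠ x ∧ σ y ≠ x) (hσ : ∀ y ∈ Y, σ y = y ∨ σ y ∉ Y)
    (h : ∀ y ∈ Y, (y ∈ L ∧ G.Adj x y) ∨ (y ∈ L ∧ σ y ∈ L ∧ G.Adj y (σ y)) ∨
      (G.Adj x y ∧ G.Adj y (σ y) ∧ linkSize k q ≤ (nb G (σ y) ∩ L).card)) :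
    ContainsCopy (Ckq k q) G := by
  obtain ⟨Z, hZY, hZ⟩ := Finset.exists_subset_card_eq hY
  let e := Z.equivFinOfCardEq hZ
  have hmem : ∀ i, (e.symm i : V) ∈ Y := fun i => hZY (e.symm i).2
  have hinj : ∀ i j, (e.symm i : V) = e.symm j → i = j := fun i j hij =>
    e.symm.injective (Subtype.ext hij)
  have hc : ∀ i j, i ≠ j → (e.symm i : V) ≠ σ (e.symm j) := by
    intro i j hij e'
    rcases hσ _ (hmem j) with h1 | h1
    · exact hij (hinj _ _ (e'.trans h1))
    · exact h1 (e' ▸ hmem i)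
  refine containsCopy_of_gadgets hq G x
    (fun i => {(e.symm i : V), σ (e.symm i)}) (fun i => Finset.card_le_two) ?_ ?_
  · intro i j hij
    have h1 := fun e' => hij (hinj i j e')
    have h2 := hc i j hij
    have h3 := hc j i hij.symm
    have h4 : σ (e.symm i) ≠ σ (e.symm j) := fun e' => h1 (σ.injective e')
    simp [h2.symm, h3, h4.symm]
    exact fun e' => hij e'.symm
  · intro i F hF hdis
    rw [Finset.disjoint_right] at hdis
    have hyF := hdis (a := (e.symm i : V)) (by simp)
    have hzF := hdis (a := σ (e.symm i : V)) (by simp)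
    have hF' : F.card + q + 5 ≤ linkSize k q := by unfold linkSize; omega
    have hne := hxY _ (hmem i)
    rcases h _ (hmem i) with h1 | h1 | h1
    · exact hL.cyc_star hq hodd hx h1.1 h1.2 F hF' hyF
    · exact hL.cyc_edge hq hodd hx h1.1 h1.2.1 h1.2.2 hne.1 hne.2 F hF' hyF hzF
    · exact hL.cyc_opp hq hodd hx h1.1 h1.2.1 hne.2 h1.2.2 F hF' hyF hzF

open Classical in
theorem LinkSet.containsCopy_star {G : SimpleGraph V} {k q : ℕ} {L : Finset V}
    (hL : LinkSet G (linkSize k q) L) (hq : 5 ≤ q) (hodd : Odd q) {x : V} (hx : x ∈ L)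
    (hk : k ≤ (nb G x ∩ L).card) : ContainsCopy (Ckq k q) G := by
  refine hL.containsCopy hq hodd hx 1 (nb G x ∩ L) hk ?_ (by simp) ?_
  · intro y hy
    simp only [mem_inter, mem_nb] at hy
    simp [hy.1.ne']
  · intro y hy
    simp only [mem_inter, mem_nb] at hy
    exact Or.inl ⟨hy.2, hy.1⟩

/-- A vertex with linearly many neighbours on both sides of the cut is the centre of a `C_{k,q}`,
because few crossing pairs are missing: most of its neighbours on its own side, together with the
vertex itself, form a linked set. -/
theorem containsCopy_of_large_inner_degree {G : SimpleGraph V} {k q n : ℕ} (hq : 5 ≤ q)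
    (hodd : Odd q) (S : Finset V) {x : V} (hx : x ∈ S)
    (hn : 100 * linkSize k q ≤ n) (hdeg : n ≤ 20 * (nb (inner G S) x).card)
    (hcut : (nb (inner G S) x).card ≤ (nb (cross G S) x).card)
    (hmiss : 1600 * ∑ y ∈ S, (missing G S y).card ≤ n ^ 2) :
    ContainsCopy (Ckq k q) G := by
  classical
  set A := nb (inner G S) x with hA
  set B := nb (cross G S) x with hB
  have hAS : ∀ a ∈ A, a ∈ S ∧ G.Adj x a := by
    intro a ha
    rw [hA, mem_nb] at ha
    exact ⟨ha.2.1 hx, ha.1⟩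
  have hBS : ∀ b ∈ B, b ∉ S ∧ G.Adj x b := by
    intro b hb
    rw [hB, mem_nb] at hb
    exact ⟨fun h => hb.2 (by simp [hx, h]), hb.1⟩
  have hKpos : 0 < linkSize k q := by unfold linkSize; omega
  have hBpos : 0 < B.card := by omega
  let A' := A.filter fun a => 5 * (missing G S a).card ≤ 2 * B.card
  let A'' := A.filter fun a => ¬ 5 * (missing G S a).card ≤ 2 * B.card
  have hsplit : A'.card + A''.card = A.card := Finset.card_filter_add_card_filter_not _
  have hA'' : 32 * A''.card ≤ n := by
    have h1 : A''.card * (2 * B.card) ≤ ∑ a ∈ A'', 5 * (missing G S a).card := by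
      rw [← smul_eq_mul]
      refine Finset.card_nsmul_le_sum _ _ _ fun a ha => ?_
      simp only [A'', mem_filter, not_le] at ha
      exact ha.2.le
    rw [← Finset.mul_sum] at h1
    have h2 : ∑ a ∈ A'', (missing G S a).card ≤ ∑ y ∈ S, (missing G S y).card :=
      Finset.sum_le_sum_of_subset fun a ha => (hAS a (Finset.mem_filter.1 ha).1).1
    have h3 : A''.card * n ≤ A''.card * (20 * B.card) := Nat.mul_le_mul_left _ (by omega)
    have h4 : n * (32 * A''.card) ≤ n * n := by nlinarith
    exact Nat.le_of_mul_le_mul_left h4 (by omega)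
  have hcommon : ∀ a ∈ A', B.card ≤ (nb G a ∩ B).card + (missing G S a).card := by
    intro a ha
    have : B ⊆ (nb G a ∩ B) ∪ missing G S a := by
      intro b hb
      have h1 := (hBS b hb).1
      have h2 := (hAS a (Finset.mem_filter.1 ha).1).1
      by_cases h3 : G.Adj a b
      · simp [mem_nb, h3, hb]
      · simp [missing, h1, h2, h3]
    exact (Finset.card_le_card this).trans (Finset.card_union_le _ _)
  have hA'5 : ∀ a ∈ A', 5 * (missing G S a).card ≤ 2 * B.card := fun a ha =>
    (Finset.mem_filter.1 ha).2
  have hxa : ∀ a ∈ A', linkSize k q ≤ (nb G x ∩ nb G a).card := by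
    intro a ha
    have h1 := hcommon a ha
    have h2 := hA'5 a ha
    have h3 : (nb G a ∩ B).card ≤ (nb G x ∩ nb G a).card := by
      refine Finset.card_le_card fun b hb => ?_
      simp only [mem_inter, mem_nb] at hb ⊢
      exact ⟨(hBS b hb.2).2, hb.1⟩
    omega
  have hL : LinkSet G (linkSize k q) (insert x A') := by
    refine ⟨?_, ?_⟩
    · have := Finset.card_le_card (Finset.subset_insert x A')
      omega
    · intro u hu v hv huv
      rw [Finset.mem_insert] at hu hv
      rcases hu with rfl | hu <;> rcases hv with rfl | hv
      · exact absurd rfl huv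
      · exact hxa v hv
      · rw [Finset.inter_comm]; exact hxa u hu
      · have h1 := hcommon u hu
        have h2 := hA'5 u hu
        have h3 := hcommon v hv
        have h4 := hA'5 v hv
        have h5 := Finset.card_union_add_card_inter (nb G u ∩ B) (nb G v ∩ B)
        have h6 : ((nb G u ∩ B) ∪ (nb G v ∩ B)).card ≤ B.card := Finset.card_le_card
          (Finset.union_subset Finset.inter_subset_right Finset.inter_subset_right)
        have h7 : ((nb G u ∩ B) ∩ (nb G v ∩ B)).card ≤ (nb G u ∩ nb G v).card :=
          Finset.card_le_card (by
            intro b hb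
            simp only [mem_inter] at hb ⊢
            exact ⟨hb.1.1, hb.2.1⟩)
        omega
  refine hL.containsCopy_star hq hodd (Finset.mem_insert_self _ _) ?_
  have h1 : A' ⊆ nb G x ∩ insert x A' := by
    intro a ha
    simp only [mem_inter, mem_nb, mem_insert]
    exact ⟨(hAS a (Finset.mem_filter.1 ha).1).2, Or.inr ha⟩
  have h2 := Finset.card_le_card h1
  have h3 : k ≤ linkSize k q := by unfold linkSize; nlinarith
  omega

/-- One endpoint from each edge of a matching. -/
theorem exists_half (σ : Equiv.Perm V) (hσ : ∀ v, σ (σ v) = v) :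
    ∃ Y : Finset V, (open Classical in σ.support.card) ≤ 2 * Y.card ∧
      ∀ y ∈ Y, σ y ≠ y ∧ σ y ∉ Y := by
  classical
  let e := Fintype.equivFin V
  let Y := univ.filter fun v => e v < e (σ v)
  have hY : ∀ v, v ∈ Y ↔ e v < e (σ v) := fun v => by simp [Y]
  refine ⟨Y, ?_, ?_⟩
  · have : σ.support ⊆ Y ∪ Y.image σ := by
      intro v hv
      rw [Equiv.Perm.mem_support] at hv
      rw [Finset.mem_union, Finset.mem_image]
      rcases lt_trichotomy (e v) (e (σ v)) with h | h | h
      · exact Or.inl ((hY v).2 h)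
      · exact absurd (e.injective h).symm hv
      · exact Or.inr ⟨σ v, (hY _).2 (by rwa [hσ]), hσ v⟩
    have h1 := (Finset.card_le_card this).trans (Finset.card_union_le _ _)
    have h2 := Finset.card_image_le (s := Y) (f := σ)
    omega
  · intro y hy
    rw [hY] at hy
    refine ⟨fun h => by simp [h] at hy, fun h => ?_⟩
    rw [hY, hσ] at h
    exact lt_asymm h hy

/-- The number of edges is at most the sum of the degrees over a vertex cover. -/
theorem ncard_edgeSet_le_of_cover (H : SimpleGraph V) (U : Finset V) (d : ℕ)
    (hd : ∀ v, (nb H v).card ≤ d) (hU : ∀ u v, H.Adj u v → u ∈ U ∨ v ∈ U) :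
    H.edgeSet.ncard ≤ U.card * d := by
  classical
  have : H.edgeSet ⊆ (U.biUnion fun u => (nb H u).image fun v => s(u, v) : Finset (Sym2 V)) := by
    intro e
    induction e using Sym2.ind with
    | _ u v =>
      intro huv
      rw [SimpleGraph.mem_edgeSet] at huv
      simp only [Finset.coe_biUnion, Set.mem_iUnion, Finset.mem_coe, Finset.mem_image, mem_nb]
      rcases hU u v huv with h | h
      · exact ⟨u, h, v, huv, rfl⟩
      · exact ⟨v, h, u, huv.symm, Sym2.eq_swap⟩
  refine (Set.ncard_le_ncard this (Finset.finite_toSet _)).trans ?_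
  rw [Set.ncard_coe_finset]
  exact Finset.card_biUnion_le_card_mul _ _ _ fun u _ => Finset.card_image_le.trans (hd u)

open Classical in
/-- If all crossing pairs are edges, a vertex `x` of maximum inner degree `d < k - 1` and a maximal
matching avoiding `x` and its inner neighbours produce `C_{k,q}` once there are `(k - 1) ^ 2` inner
edges: with fewer than `k` gadgets, the inner graph has a vertex cover of size at most
`2 (k - 1) - d`. -/
theorem containsCopy_of_complete {G : SimpleGraph V} {k q : ℕ} (hq : 5 ≤ q) (hodd : Odd q)
    (S : Finset V) {x : V} (hx : x ∈ S) (hL : LinkSet G (linkSize k q) S)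
    (hopp : ∀ y, y ∉ S → linkSize k q ≤ (nb G y ∩ S).card)
    (hcomp : ∀ y, y ∉ S → G.Adj x y)
    (hmax : ∀ v, (nb (inner G S) v).card ≤ (nb (inner G S) x).card)
    (hlt : (nb (inner G S) x).card < k - 1)
    (he : (k - 1) ^ 2 ≤ (inner G S).edgeSet.ncard) : ContainsCopy (Ckq k q) G := by
  set H := inner G S with hH
  obtain ⟨σ, hσ, hσmax⟩ := Finset.exists_max_image
    (univ.filter fun σ : Equiv.Perm V => IsMat H σ ∧ ∀ v ∈ insert x (nb H x), σ v = v)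
    (fun σ => σ.support.card) ⟨1, by simp [IsMat.one]⟩
  simp only [mem_filter, mem_univ, true_and] at hσ hσmax
  obtain ⟨hσ, hfix⟩ := hσ
  obtain ⟨Y, hYc, hY⟩ := exists_half σ hσ.1
  by_cases hk : k ≤ (nb H x).card + Y.card
  · refine hL.containsCopy hq hodd hx σ (nb H x ∪ Y) ?_ ?_ ?_ ?_
    · rw [Finset.card_union_of_disjoint]
      · exact hk
      · rw [Finset.disjoint_left]
        intro y hy hy'
        exact (hY y hy').1 (hfix y (Finset.mem_insert_of_mem hy))
    · intro y hy
      have hne : y ≠ x := by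
        rintro rfl
        rcases Finset.mem_union.1 hy with h | h
        · exact (mem_nb.1 h).ne rfl
        · exact (hY y h).1 (hfix y (Finset.mem_insert_self _ _))
      refine ⟨hne, fun e => hne ?_⟩
      exact σ.injective (e.trans (hfix x (Finset.mem_insert_self _ _)).symm)
    · intro y hy
      rcases Finset.mem_union.1 hy with h | h
      · exact Or.inl (hfix y (Finset.mem_insert_of_mem h))
      · refine Or.inr fun h' => ?_
        rcases Finset.mem_union.1 h' with h2 | h2
        · exact (hY y h).1 (σ.injective (hfix _ (Finset.mem_insert_of_mem h2)))
        · exact (hY y h).2 h2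
    · intro y hy
      rcases Finset.mem_union.1 hy with h | h
      · have := mem_nb.1 h
        exact Or.inl ⟨this.2.1 hx, this.1⟩
      · have h1 := hσ.2 y (hY y h).1
        by_cases hyS : y ∈ S
        · exact Or.inr (Or.inl ⟨hyS, h1.2.1 hyS, h1.1⟩)
        · exact Or.inr (Or.inr ⟨hcomp y hyS, h1.1, hopp _ fun h2 => hyS (h1.2.2 h2)⟩)
  · exfalso
    have hcov := ncard_edgeSet_le_of_cover H (nb H x ∪ σ.support) _ hmax (by
      intro u v huv
      by_contra hc
      simp only [mem_union, not_or, Equiv.Perm.mem_support, not_not] at hc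
      obtain ⟨⟨hu1, hu2⟩, hv1, hv2⟩ := hc
      have hux : u ≠ x := by rintro rfl; exact hv1 (mem_nb.2 huv)
      have hvx : v ≠ x := by rintro rfl; exact hu1 (mem_nb.2 huv.symm)
      obtain ⟨a, b⟩ := hσ.add_edge huv hu2 hv2
      have := hσmax _ ⟨a, by
        intro w hw
        have hwu : w ≠ u := by
          rintro rfl
          exact (Finset.mem_insert.1 hw).elim hux hu1
        have hwv : w ≠ v := by
          rintro rfl
          exact (Finset.mem_insert.1 hw).elim hvx hv1
        rw [Equiv.Perm.mul_apply, Equiv.swap_apply_of_ne_of_ne hwu hwv]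
        exact hfix w hw⟩
      rw [b, Finset.card_insert_of_notMem (by simp [hu2, huv.ne]),
        Finset.card_insert_of_notMem (by simp [hv2])] at this
      omega)
    have h1 := Finset.card_union_le (nb H x) σ.support
    obtain ⟨m, rfl⟩ : ∃ m, k = m + 1 := ⟨k - 1, by omega⟩
    simp only [Nat.add_sub_cancel] at hlt he
    set d := (nb H x).card
    have h2 : (nb H x ∪ σ.support).card + d ≤ 2 * m := by omega
    nlinarith

/-! ### Structure of the extremal cut -/

theorem balance_bound {a b n e : ℕ} (hab : a + b = n) (h : n ^ 2 / 4 ≤ a * b + e)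
    (he : 1600 * e < n ^ 2) : 40 * b ≤ 21 * n + 35 := by
  have h1 : n ^ 2 ≤ 4 * (a * b + e) + 3 := by omega
  subst hab
  by_contra hc
  push Not at hc
  have h2 : a + 36 + (20 * a) ≤ 19 * b := by omega
  nlinarith

theorem balance_bound' {a b n e k : ℕ} (hk : 2 ≤ k) (hab : a + b = n)
    (h : n ^ 2 / 4 ≤ a * b + e) (he : 2 * e ≤ n * k) (hn : 80 * k ^ 3 ≤ n) :
    4 * k * a ≤ 4 * k * b + n := by
  have h1 : n ^ 2 ≤ 4 * (a * b + e) + 3 := by omega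
  by_contra hc
  push Not at hc
  have hba : b ≤ a := by
    by_contra h'
    push Not at h'
    have : 4 * k * a ≤ 4 * k * b := Nat.mul_le_mul_left _ h'.le
    omega
  obtain ⟨δ, rfl⟩ := Nat.exists_eq_add_of_le hba
  have h3 : n < 4 * k * δ := by nlinarith
  have h4 : δ ^ 2 ≤ 2 * (n * k) + 3 := by subst hab; nlinarith
  have hnpos : 0 < n := by
    have : 0 < k ^ 3 := by positivity
    omega
  have h5 : n * n < (4 * k * δ) * (4 * k * δ) := Nat.mul_lt_mul'' h3 h3
  have h6 : (4 * k * δ) * (4 * k * δ) ≤ 16 * k ^ 2 * (2 * (n * k) + 3) := by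
    calc (4 * k * δ) * (4 * k * δ) = 16 * k ^ 2 * δ ^ 2 := by ring
      _ ≤ _ := Nat.mul_le_mul_left _ h4
  have h7 : 3 ≤ 3 * (n * k) := by nlinarith [Nat.mul_le_mul hnpos hk]
  have h8 : 16 * k ^ 2 * (2 * (n * k) + 3) ≤ 16 * k ^ 2 * (5 * (n * k)) :=
    Nat.mul_le_mul_left _ (by omega)
  have h9 : 16 * k ^ 2 * (5 * (n * k)) = n * (80 * k ^ 3) := by ring
  have h10 : n * (80 * k ^ 3) ≤ n * n := Nat.mul_le_mul_left _ hn
  omega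

open Classical in
/-- If inner degrees are small, each side of the cut is a linked set, and every vertex has many
neighbours on the opposite side. -/
theorem linkSet_side {G : SimpleGraph V} {k q n : ℕ} {S T : Finset V}
    (hST : ∀ v, v ∈ T ↔ v ∉ S) (hn : 100 * linkSize k q ≤ n) (hb : 40 * T.card ≤ 21 * n + 35)
    (ha : 19 * n ≤ 40 * S.card + 35)
    (hX : ∀ v, 9 * n ≤ 20 * (nb (cross G S) v).card + 10) :
    LinkSet G (linkSize k q) S ∧ ∀ y, y ∉ S → linkSize k q ≤ (nb G y ∩ S).card := by
  have hK : 5 ≤ linkSize k q := by unfold linkSize; omega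
  refine ⟨⟨by omega, ?_⟩, ?_⟩
  · intro u hu v hv huv
    have h5 := Finset.card_union_add_card_inter (nb (cross G S) u) (nb (cross G S) v)
    have hsub : ∀ w ∈ S, nb (cross G S) w ⊆ T := by
      intro w hw z hz
      rw [mem_nb] at hz
      rw [hST]
      exact fun h => hz.2 (by simp [hw, h])
    have h6 := Finset.card_le_card (Finset.union_subset (hsub u hu) (hsub v hv))
    have h7 : (nb (cross G S) u ∩ nb (cross G S) v).card ≤ (nb G u ∩ nb G v).card :=
      Finset.card_le_card (by
        intro b hb
        simp only [mem_inter, mem_nb] at hb ⊢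
        exact ⟨hb.1.1, hb.2.1⟩)
    have := hX u
    have := hX v
    omega
  · intro y hy
    have h7 : (nb (cross G S) y).card ≤ (nb G y ∩ S).card :=
      Finset.card_le_card (by
        intro b hb
        simp only [mem_inter, mem_nb] at hb ⊢
        refine ⟨hb.1, ?_⟩
        by_contra h
        exact hb.2 (by simp [hy, h]))
    have := hX y
    omega

open Classical in
/-- `k` disjoint inner edges yield a `C_{k,q}`: since every vertex misses few vertices on the
opposite side, some `x ∈ S` off the matching is adjacent to all matched vertices outside `S`. -/
theorem containsCopy_of_matching {G : SimpleGraph V} {k q τ : ℕ} (hq : 5 ≤ q) (hodd : Odd q)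
    {S : Finset V} (hL : LinkSet G (linkSize k q) S)
    (hopp : ∀ y, y ∉ S → linkSize k q ≤ (nb G y ∩ S).card)
    (hτ : ∀ y, y ∉ S → (missing G S y).card ≤ τ) (hS : 2 * k + k * τ < S.card)
    (σ : Equiv.Perm V) (hσ : IsMat (inner G S) σ) (hc : 2 * (k - 1) < σ.support.card) :
    ContainsCopy (Ckq k q) G := by
  obtain ⟨Y, hYc, hY⟩ := exists_half σ hσ.1
  obtain ⟨Z, hZY, hZ⟩ := Finset.exists_subset_card_eq (show k ≤ Y.card by omega)
  obtain ⟨x, hx, hxF⟩ := exists_fresh (A := S)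
    (F := (Z ∪ Z.image σ) ∪ (Z.filter (· ∉ S)).biUnion (missing G S)) (by
    refine lt_of_le_of_lt ((Finset.card_union_le _ _).trans (Nat.add_le_add
      ((Finset.card_union_le _ _).trans (Nat.add_le_add_left Finset.card_image_le _))
      (Finset.card_biUnion_le_card_mul _ _ τ fun y hy => hτ y (Finset.mem_filter.1 hy).2))) ?_
    have := Nat.mul_le_mul_right τ (Finset.card_filter_le Z (· ∉ S))
    rw [hZ] at this ⊢
    omega)
  simp only [mem_union, not_or, mem_image, mem_biUnion, mem_filter, not_exists, not_and] at hxF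
  obtain ⟨⟨hxZ, hxσ⟩, hxm⟩ := hxF
  refine hL.containsCopy hq hodd hx σ Z hZ.ge ?_ ?_ ?_
  · exact fun y hy => ⟨fun e => hxZ (e ▸ hy), hxσ y hy⟩
  · exact fun y hy => Or.inr fun h => (hY y (hZY hy)).2 (hZY h)
  · intro y hy
    have h1 := hσ.2 y (hY y (hZY hy)).1
    by_cases hyS : y ∈ S
    · exact Or.inr (Or.inl ⟨hyS, h1.2.1 hyS, h1.1⟩)
    · refine Or.inr (Or.inr ⟨?_, h1.1, hopp _ fun h2 => hyS (h1.2.2 h2)⟩)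
      have h2 := hxm y ⟨hy, hyS⟩
      simp only [missing, mem_filter, mem_univ, true_and, not_and, not_not] at h2
      exact (h2 (by simp [hx, hyS])).symm

/-- The theorem in terms of inner and crossing degrees. -/
theorem inner_degree_core {G : SimpleGraph V} {k q n : ℕ} (hk : 2 ≤ k) (hq : 5 ≤ q)
    (hodd : Odd q) (hfree : ¬ ContainsCopy (Ckq k q) G) {S T : Finset V}
    (hST : ∀ v, v ∈ T ↔ v ∉ S) (hV : Fintype.card V = n)
    (hn : 100 * linkSize k q + 80 * k ^ 3 ≤ n)
    (he : n ^ 2 / 4 + (k - 1) ^ 2 ≤ (inner G S).edgeSet.ncard + (cross G S).edgeSet.ncard)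
    (hdeg : ∀ v, n / 2 ≤ (nb G v).card)
    (hcut : ∀ v, (nb (inner G S) v).card ≤ (nb (cross G S) v).card)
    (hin : 1600 * (inner G S).edgeSet.ncard < n ^ 2) :
    (∀ v, (nb (inner G S) v).card ≤ k - 1) ∧ ∃ v, (nb (inner G S) v).card = k - 1 := by
  classical
  have hTS : ∀ v, v ∈ S ↔ v ∉ T := fun v => by rw [hST, not_not]
  have hiT := inner_compl G hST
  have hcT := cross_compl G hST
  have hcard : S.card + T.card = n := hV ▸ card_add_card_compl hST
  have hsumS := sum_missing G hST
  have hsumT := sum_missing G hTS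
  rw [hcT] at hsumT
  have hprod : S.card * T.card ≤ n ^ 2 / 4 := by
    rw [Nat.le_div_iff_mul_le (by norm_num), ← hcard]
    have := four_mul_le_pow_two_add S.card T.card
    nlinarith
  have hmS : ∑ x ∈ S, (missing G S x).card + (k - 1) ^ 2 ≤ (inner G S).edgeSet.ncard := by omega
  have hmT : ∑ x ∈ T, (missing G T x).card + (k - 1) ^ 2 ≤ (inner G S).edgeSet.ncard := by
    rw [mul_comm] at hsumT; omega
  have hsmall : ∀ v, 20 * (nb (inner G S) v).card < n := by
    intro v
    by_contra hc
    push Not at hc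
    apply hfree
    by_cases hv : v ∈ S
    · exact containsCopy_of_large_inner_degree hq hodd S hv (by omega) hc (hcut v) (by omega)
    · exact containsCopy_of_large_inner_degree hq hodd T ((hST v).2 hv) (n := n) (by omega)
        (by rw [hiT]; exact hc) (by rw [hiT, hcT]; exact hcut v) (by omega)
  have hX : ∀ v, 9 * n ≤ 20 * (nb (cross G S) v).card + 10 := by
    intro v
    have h1 := hsmall v
    have h2 := hdeg v
    rw [nb_inner_add_nb_cross G S] at h2
    omega
  have hbal : n ^ 2 / 4 ≤ S.card * T.card + (inner G S).edgeSet.ncard := by omega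
  have hT := balance_bound hcard hbal hin
  have hS := balance_bound ((add_comm _ _).trans hcard) (by rw [mul_comm]; exact hbal) hin
  obtain ⟨hLS, hoS⟩ := linkSet_side (k := k) (q := q) hST (n := n) (by omega) hT (by omega) hX
  obtain ⟨hLT, hoT⟩ := linkSet_side (k := k) (q := q) hTS (n := n) (by omega) hS (by omega)
    (by rw [hcT]; exact hX)
  have hub : ∀ v, (nb (inner G S) v).card ≤ k - 1 := by
    intro v
    by_contra hc
    push Not at hc
    apply hfree
    have hsub : ∀ R : Finset V, v ∈ R → nb (inner G R) v ⊆ nb G v ∩ R := by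
      intro R hv y hy
      rw [mem_nb] at hy
      simp only [mem_inter, mem_nb]
      exact ⟨hy.1, hy.2.1 hv⟩
    by_cases hv : v ∈ S
    · have := Finset.card_le_card (hsub S hv)
      exact hLS.containsCopy_star hq hodd hv (by omega)
    · have := Finset.card_le_card (hsub T ((hST v).2 hv))
      rw [hiT] at this
      exact hLT.containsCopy_star hq hodd ((hST v).2 hv) (by omega)
  refine ⟨hub, ?_⟩
  by_contra hno
  push Not at hno
  apply hfree
  have hub' : ∀ v, (nb (inner G S) v).card ≤ k - 2 := fun v => by
    have := hub v
    have := hno v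
    omega
  by_cases hmat : ∃ σ : Equiv.Perm V, IsMat (inner G S) σ ∧ 2 * (k - 1) < σ.support.card
  · obtain ⟨σ, hσ, hσc⟩ := hmat
    have h2e : 2 * (inner G S).edgeSet.ncard ≤ n * k := by
      rw [← sum_nb, ← hV, ← Finset.card_univ, ← smul_eq_mul]
      exact Finset.sum_le_card_nsmul _ _ _ fun v _ => (hub v).trans (by omega)
    have hb := balance_bound' hk hcard hbal h2e (by omega)
    refine containsCopy_of_matching hq hodd hLS hoS (τ := S.card - n / 2 + k) ?_ ?_ σ hσ hσc
    · intro y hy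
      have h1 := nb_cross_add_missing G hTS ((hST y).2 hy)
      have h2 := hdeg y
      rw [nb_inner_add_nb_cross G S] at h2
      have h3 := hub y
      have h4 : missing G T y = missing G S y := by
        ext z
        simp only [missing, mem_filter, mem_univ, true_and, hST]
        tauto
      rw [h4, hcT] at h1
      omega
    · have h1 : 2 * (S.card - n / 2) ≤ (S.card - T.card) + 1 := by omega
      have h2 : 4 * (k * (S.card - T.card)) ≤ n := by
        rw [Nat.mul_sub]
        rw [mul_assoc, mul_assoc] at hb
        omega
      have h3 : 2 * (k * (S.card - n / 2)) ≤ k * (S.card - T.card) + k := by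
        calc 2 * (k * (S.card - n / 2)) = k * (2 * (S.card - n / 2)) := by ring
          _ ≤ k * ((S.card - T.card) + 1) := Nat.mul_le_mul_left _ h1
          _ = _ := by ring
      have h4 : 2 * k ^ 2 ≤ k ^ 3 := by
        rw [pow_succ, mul_comm]; exact Nat.mul_le_mul_left _ hk
      have h5 : 2 * k ≤ k ^ 2 := by rw [sq]; exact Nat.mul_le_mul_right _ hk
      rw [Nat.mul_add, ← sq]
      omega
  · push Not at hmat
    have hgal := sum_nb_le_of_matching (k - 2) (k - 1) (inner G S) hub' hmat
    rw [sum_nb, show k - 2 + 1 = k - 1 by omega, mul_assoc, ← sq] at hgal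
    have hzero : ∑ x ∈ S, (missing G S x).card = 0 := by omega
    have hcomp : ∀ u ∈ S, ∀ v, v ∉ S → G.Adj u v := by
      intro u hu v hv
      have h1 := Finset.sum_eq_zero_iff.1 hzero u hu
      by_contra hc
      have : v ∈ missing G S u := by simp [missing, hu, hv, hc]
      rw [Finset.card_eq_zero.1 h1] at this
      simp at this
    have : 0 < Fintype.card V := by unfold linkSize at hn; omega
    obtain ⟨x, -, hxmax⟩ := Finset.exists_max_image (univ : Finset V)
      (fun v => (nb (inner G S) v).card) (Finset.card_pos.1 (by rwa [Finset.card_univ]))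
    have hlt : (nb (inner G S) x).card < k - 1 := by have := hub' x; omega
    by_cases hx : x ∈ S
    · exact containsCopy_of_complete hq hodd S hx hLS hoS (hcomp x hx)
        (fun v => hxmax v (Finset.mem_univ v)) hlt (by omega)
    · exact containsCopy_of_complete hq hodd T ((hST x).2 hx) hLT hoT
        (fun y hy => (hcomp y ((hTS y).2 hy) x hx).symm)
        (fun v => by rw [hiT]; exact hxmax v (Finset.mem_univ v)) (by rw [hiT]; exact hlt)
        (by rw [hiT]; omega)

/-! ### Translation to the definitions of the statement -/

theorem crossEdges_eq {V : Type*} (G : SimpleGraph V) (S : Finset V) :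
    crossEdges G (S : Set V) (S : Set V)ᶜ = (cross G S).edgeSet := by
  ext e
  induction e using Sym2.ind with
  | _ u v =>
    simp only [crossEdges, Set.mem_ofPred_eq, SimpleGraph.mem_edgeSet, cross, Finset.mem_coe,
      Set.mem_compl_iff, Sym2.eq_iff]
    refine and_congr_right fun _ => ⟨?_, ?_⟩
    · rintro ⟨a, ha, b, hb, ⟨rfl, rfl⟩ | ⟨rfl, rfl⟩⟩ <;> tauto
    · intro h
      by_cases hu : u ∈ S
      · exact ⟨u, hu, v, fun hv => h (by simp [hu, hv]), Or.inl ⟨rfl, rfl⟩⟩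
      · exact ⟨v, by tauto, u, hu, Or.inr ⟨rfl, rfl⟩⟩

theorem inEdges_union_eq {V : Type*} (G : SimpleGraph V) (S : Finset V) :
    inEdges G (S : Set V) ∪ inEdges G (S : Set V)ᶜ = (inner G S).edgeSet := by
  ext e
  induction e using Sym2.ind with
  | _ u v =>
    simp only [inEdges, Set.mem_union, Set.mem_ofPred_eq, SimpleGraph.mem_edgeSet, inner,
      Finset.mem_coe, Set.mem_compl_iff, Sym2.mem_iff, forall_eq_or_imp, forall_eq]
    tauto

theorem edgesIn_add (G : SimpleGraph V) (S : Finset V) :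
    edgesIn G (S : Set V) + edgesIn G (S : Set V)ᶜ = (inner G S).edgeSet.ncard := by
  rw [← inEdges_union_eq, Set.ncard_union_eq _ (Set.toFinite _) (Set.toFinite _)]
  · rfl
  · rw [Set.disjoint_left]
    intro e
    induction e using Sym2.ind with
    | _ u v =>
      intro h1 h2
      exact h2.2 u (by simp) (h1.2 u (by simp))

theorem ncard_edgeSet_eq (G : SimpleGraph V) (S : Finset V) :
    G.edgeSet.ncard = (inner G S).edgeSet.ncard + (cross G S).edgeSet.ncard := by
  have h1 := sum_nb G
  rw [Finset.sum_congr rfl fun v _ => nb_inner_add_nb_cross G S v, Finset.sum_add_distrib, sum_nb,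
    sum_nb] at h1
  omega

/-- In a maximum cut no vertex has more neighbours on its own side than on the other one, since
moving it would enlarge the cut. -/
theorem inner_le_cross_of_max {G : SimpleGraph V} {S : Finset V}
    (hmax : ∀ W : Finset V, (cross G W).edgeSet.ncard ≤ (cross G S).edgeSet.ncard) (v : V) :
    (nb (inner G S) v).card ≤ (nb (cross G S) v).card := by
  classical
  let W : Finset V := univ.filter fun u => if u = v then u ∉ S else u ∈ S
  have hW : ∀ u, u ∈ W ↔ if u = v then u ∉ S else u ∈ S := by simp [W]
  have hWv : v ∈ W ↔ v ∉ S := by simp [hW]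
  have hWu : ∀ u, u ≠ v → (u ∈ W ↔ u ∈ S) := by intro u hu; simp [hW, hu]
  have hI : ∀ H : SimpleGraph V, (((nb H v).image fun u => s(v, u) : Finset (Sym2 V)) :
      Set (Sym2 V)).ncard = (nb H v).card := by
    intro H
    rw [Set.ncard_coe_finset, Finset.card_image_of_injective]
    intro a b hab
    rcases Sym2.eq_iff.1 hab with ⟨_, h⟩ | ⟨h1, h2⟩
    · exact h
    · exact h2.trans h1
  have hsub : (cross G S).edgeSet ∪ ((nb (inner G S) v).image fun u => s(v, u) : Finset (Sym2 V)) ⊆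
      (cross G W).edgeSet ∪ ((nb (cross G S) v).image fun u => s(v, u) : Finset (Sym2 V)) := by
    intro e
    induction e using Sym2.ind with
    | _ a b =>
      rintro (he | he)
      · rw [SimpleGraph.mem_edgeSet] at he
        by_cases ha : a = v
        · subst ha
          refine Or.inr ?_
          simp only [Finset.coe_image, Set.mem_image, Finset.mem_coe, mem_nb]
          exact ⟨b, he, rfl⟩
        by_cases hb : b = v
        · subst hb
          refine Or.inr ?_
          simp only [Finset.coe_image, Set.mem_image, Finset.mem_coe, mem_nb]
          exact ⟨a, he.symm, Sym2.eq_swap⟩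
        · refine Or.inl ?_
          rw [SimpleGraph.mem_edgeSet]
          exact ⟨he.1, by rw [hWu a ha, hWu b hb]; exact he.2⟩
      · simp only [Finset.coe_image, Set.mem_image, Finset.mem_coe, mem_nb] at he
        obtain ⟨u, hu, he⟩ := he
        refine Or.inl ?_
        rw [← he, SimpleGraph.mem_edgeSet]
        refine ⟨hu.1, ?_⟩
        rw [hWv, hWu u hu.1.ne']
        have := hu.2
        tauto
  have h1 := Set.ncard_le_ncard hsub (Set.toFinite _)
  have h2 := h1.trans (Set.ncard_union_le _ _)
  rw [Set.ncard_union_eq _ (Set.toFinite _) (Set.toFinite _), hI, hI] at h2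
  · have := hmax W
    omega
  · rw [Set.disjoint_left]
    intro e he he'
    simp only [Finset.coe_image, Set.mem_image, Finset.mem_coe, mem_nb] at he'
    obtain ⟨u, hu, rfl⟩ := he'
    rw [SimpleGraph.mem_edgeSet] at he
    exact he.2 hu.2

theorem ncard_inter_eq (G : SimpleGraph V) {S R : Finset V} (hR : inner G R = inner G S) {v : V}
    (hv : v ∈ R) : (G.neighborSet v ∩ (R : Set V)).ncard = (nb (inner G S) v).card := by
  rw [← Set.ncard_coe_finset, ← hR]
  congr 1
  ext w
  simp only [Set.mem_inter_iff, SimpleGraph.mem_neighborSet, Finset.mem_coe, mem_nb, inner]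
  tauto

end MaxDegree

open MaxDegree

/-- **Claim 4.** In the standard setup, `max{Δ(G[V₀]), Δ(G[V₁])} = k - 1`. -/
theorem max_degree_attained (k q : ℕ) (hk : 2 ≤ k) (hq : 5 ≤ q) (hqodd : Odd q) :
    ∃ N : ℕ, ∀ n : ℕ, N ≤ n → ∀ G : SimpleGraph (Fin n),
      ¬ ContainsCopy (Ckq k q) G →
      n ^ 2 / 4 + (k - 1) ^ 2 ≤ G.edgeSet.ncard →
      (∀ v, n / 2 ≤ (G.neighborSet v).ncard) →
      ∀ V₀ V₁ : Set (Fin n), V₀ ∪ V₁ = Set.univ → Disjoint V₀ V₁ →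
        (∀ W₀ W₁ : Set (Fin n), W₀ ∪ W₁ = Set.univ → Disjoint W₀ W₁ →
          edgesBetween G W₀ W₁ ≤ edgesBetween G V₀ V₁) →
        ((edgesIn G V₀ + edgesIn G V₁ : ℕ) : ℝ) < (n : ℝ) ^ 2 / 1600 →
        max (DeltaIn G V₀) (DeltaIn G V₁) = k - 1 := by
  refine ⟨100 * linkSize k q + 80 * k ^ 3, ?_⟩
  intro n hn G hfree he hdeg V₀ V₁ hunion hdisj hmax hin
  classical
  obtain rfl : V₁ = V₀ᶜ := by
    ext v
    have h1 : v ∈ V₀ ∪ V₁ := by rw [hunion]; trivial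
    have h2 : v ∈ V₀ → v ∉ V₁ := fun h => Set.disjoint_left.1 hdisj h
    simp only [Set.mem_union, Set.mem_compl_iff] at h1 ⊢
    tauto
  obtain ⟨S, rfl⟩ : ∃ S : Finset (Fin n), (S : Set (Fin n)) = V₀ := ⟨V₀.toFinset, by simp⟩
  have hST : ∀ v, v ∈ Sᶜ ↔ v ∉ S := fun v => Finset.mem_compl
  have hmax' : ∀ W : Finset (Fin n),
      (cross G W).edgeSet.ncard ≤ (cross G S).edgeSet.ncard := by
    intro W
    rw [← crossEdges_eq, ← crossEdges_eq]
    exact hmax _ _ (Set.union_compl_self _) disjoint_compl_right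
  have hin' : 1600 * (inner G S).edgeSet.ncard < n ^ 2 := by
    rw [edgesIn_add] at hin
    have h1 : (1600 : ℝ) * ((inner G S).edgeSet.ncard : ℝ) < (n : ℝ) ^ 2 := by linarith
    exact_mod_cast h1
  obtain ⟨hub, v, hv⟩ := inner_degree_core hk hq hqodd hfree hST (by simp) hn
    (by rw [← ncard_edgeSet_eq]; exact he)
    (fun v => by
      have := hdeg v
      rw [← Set.ncard_coe_finset]
      convert this using 2
      ext w
      simp [mem_nb])
    (inner_le_cross_of_max hmax') hin'
  have hiT := inner_compl G hST
  -- `DeltaIn` is a supremum of natural numbers, so the bound also provides `BddAbove`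
  have hbd : ∀ R : Finset (Fin n), inner G R = inner G S →
      ∀ d ∈ {d | ∃ v ∈ (R : Set (Fin n)), d = (G.neighborSet v ∩ (R : Set (Fin n))).ncard},
        d ≤ k - 1 := by
    rintro R hR d ⟨w, hw, rfl⟩
    rw [ncard_inter_eq G hR (Finset.mem_coe.1 hw)]
    exact hub w
  have hle : ∀ R : Finset (Fin n), inner G R = inner G S → DeltaIn G (R : Set (Fin n)) ≤ k - 1 := by
    intro R hR
    rcases Set.eq_empty_or_nonempty
      {d | ∃ v ∈ (R : Set (Fin n)), d = (G.neighborSet v ∩ (R : Set (Fin n))).ncard} with h | h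
    · rw [DeltaIn, h]; simp
    · exact csSup_le h (hbd R hR)
  have hge : ∀ R : Finset (Fin n), inner G R = inner G S → v ∈ R →
      k - 1 ≤ DeltaIn G (R : Set (Fin n)) := by
    intro R hR hvR
    exact le_csSup ⟨k - 1, hbd R hR⟩ ⟨v, hvR, by rw [ncard_inter_eq G hR hvR, hv]⟩
  rw [← Finset.coe_compl]
  refine le_antisymm (max_le (hle S rfl) (hle Sᶜ hiT)) ?_
  by_cases hvS : v ∈ S
  · exact le_max_of_le_left (hge S rfl hvS)
  · exact le_max_of_le_right (hge Sᶜ hiT ((hST v).2 hvS))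
end

section
/- For every integer k ≥ 2 and every odd integer q ≥ 5 there exists N such that for all n ≥ N the following holds. Let G be a C_{k,q}-free graph on n vertices with e(G) ≥ ⌊n²/4⌋ + (k−1)² and δ(G) ≥ ⌊n/2⌋, let V(G) = V₀ ∪ V₁ be a partition maximizing the number of crossing edges e(V₀,V₁), and suppose e(V₀) + e(V₁) < n²/1600. Then e(V₀)·e(V₁) = 0; that is, at least one of V₀ and V₁ spans no edge of G. -/
/-!
Let `S = V₀` and let `H` be the graph of the edges inside the two classes (`ownGraph`).

*Embedding.* All but at most `n / 32` vertices have fewer than `n / 25` neighbours in their own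
class, hence almost `n / 2` neighbours across. From such vertices, paths of any prescribed length
can be routed greedily back and forth across the partition, ending in a neighbour of a given vertex
`x` and avoiding any bounded set (`wellConnected_lowOwn`, `exists_zigzag`). So an edge of `H` at
`x`, an edge of `H` on the side of `x`, or an edge of `H` on the other side with an end adjacent
to `x` each extend to a cycle of length `q` through `x`, and `k` such edges that meet at most in `x`
give a copy of `C_{k,q}` (`card_bases_lt`). Since a maximum cut gives every vertex at least as many
neighbours across as in its own class, a vertex with at least `n / 25` neighbours in its own class
would already be the center of a copy (`lowOwn_eq_univ`); so no vertex is exceptional.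

*Counting.* Take a maximal matching `M` of `H`, with `ν` edges and covered set `C`. For a vertex `x`
with degree `d` in `H`, let `i` be the number of its `H`-neighbours in `C`, let `y` be the number of
edges of `M` on the other side with both ends not adjacent to `x`, and let `z` be the number of the
remaining edges of `M` that contain no `H`-neighbour of `x`. Freeness gives `d + z ≤ k - 1`, and
`i ≥ ν - z - y`. Since `M` is maximal, `C` covers all edges of `H`, so `2 e(H)` is the sum of
`2 d - i` over `C`, which is at most `2 ν (2 (k - 1) - ν) + ∑ (y - z) ≤ 2 (k - 1)² + ∑ (y - z)`.
On the other hand `e(G) ≥ ⌊n²/4⌋ + (k - 1)²` makes `2 e(H)` at least `2 (k - 1)²` plus twice the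
number of missing crossing edges, that is, at least `2 (k - 1)² + 2 ∑ y`. Hence `∑ (y + z) ≤ 0`.
But if both classes span edges, then `M` has edges in both classes, and `y + z > 0` at each covered
vertex (`no_edges_on_both_sides`).
-/

open SimpleGraph

section Splitting

variable {V : Type*}

/-- The edges of `G` that stay inside one of the two classes `S`, `Sᶜ`. -/
def ownGraph (G : SimpleGraph V) (S : Set V) : SimpleGraph V where
  Adj u v := G.Adj u v ∧ (u ∈ S ↔ v ∈ S)
  symm := ⟨fun _ _ h => ⟨h.1.symm, h.2.symm⟩⟩
  loopless := ⟨fun _ h => h.1.ne rfl⟩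

/-- The edges of `G` that cross from `S` to `Sᶜ`. -/
def crossGraph (G : SimpleGraph V) (S : Set V) : SimpleGraph V where
  Adj u v := G.Adj u v ∧ ¬ (u ∈ S ↔ v ∈ S)
  symm := ⟨fun _ _ h => ⟨h.1.symm, fun h' => h.2 h'.symm⟩⟩
  loopless := ⟨fun _ h => h.1.ne rfl⟩

lemma ownGraph_adj {G : SimpleGraph V} {S : Set V} {u v : V} :
    (ownGraph G S).Adj u v ↔ G.Adj u v ∧ (u ∈ S ↔ v ∈ S) := Iff.rfl

lemma crossGraph_adj {G : SimpleGraph V} {S : Set V} {u v : V} :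
    (crossGraph G S).Adj u v ↔ G.Adj u v ∧ ¬ (u ∈ S ↔ v ∈ S) := Iff.rfl

end Splitting

/-! ### Building a copy of `C_{k,q}` -/

section Embedding

variable {V : Type*}

/-- `l` is a petal at `x` with `r` vertices: listing `x` first and then `l` runs once around
a cycle of `G`, provided `x ∉ l`, which is required separately where petals are used. -/
structure IsPetal (G : SimpleGraph V) (x : V) (r : ℕ) (l : List V) : Prop where
  length_eq : l.length = r
  chain : (x :: l).IsChain G.Adj
  nodup : l.Nodup
  closes : ∀ y ∈ l.getLast?, G.Adj y x

lemma containsCopy_of_petals {G : SimpleGraph V} {k q : ℕ} (hq : 5 ≤ q) (x : V)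
    (L : Fin k → List V) (hL : ∀ i, IsPetal G x (q - 1) (L i)) (hx : ∀ i, x ∉ L i)
    (hdisj : ∀ i j, i ≠ j → ∀ c ∈ L i, c ∉ L j) : ContainsCopy (Ckq k q) G := by
  have hlen : ∀ i, (L i).length = q - 1 := fun i => (hL i).length_eq
  let f : Option (Fin k × Fin (q - 1)) → V := fun o =>
    match o with
    | none => x
    | some (i, j) => (L i)[(j : ℕ)]'(by rw [hlen]; exact j.2)
  have hmem : ∀ i j, f (some (i, j)) ∈ L i := fun i j => List.getElem_mem _
  have hrel : ∀ a b, CkqRel k q a b → G.Adj (f a) (f b) := by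
    intro a b hab
    match a, b, hab with
    | none, some (i, j), hab =>
      have hc := List.isChain_iff_getElem.1 (hL i).chain
      rcases hab with h0 | h0
      · have := hc 0 (by simp [hlen]; omega)
        simpa [f, h0] using this
      · have hcl := (hL i).closes
        have hne : L i ≠ [] := by
          intro h; have := hlen i; rw [h] at this; simp at this; omega
        have := hcl _ (List.getLast_mem_getLast? hne)
        rw [List.getLast_eq_getElem] at this
        have h2 : (L i).length - 1 = (j : ℕ) := by rw [hlen, h0]; omega
        simp only [h2] at this
        exact this.symm
    | some (i, j), some (i', j'), hab =>
      obtain ⟨rfl, h⟩ := hab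
      have hc := List.isChain_iff_getElem.1 (hL i).chain
      have := hc (j + 1) (by simp [hlen]; omega)
      simpa [f, h] using this
  refine ⟨⟨f, ?_⟩, ?_⟩
  · intro a b hab
    rw [Ckq, SimpleGraph.fromRel_adj] at hab
    rcases hab.2 with h | h
    · exact hrel _ _ h
    · exact (hrel _ _ h).symm
  · intro a b hab
    change f a = f b at hab
    match a, b, hab with
    | none, none, _ => rfl
    | none, some (i, j), hab =>
      exact absurd (hab ▸ hmem i j : f none ∈ L i) (hx i)
    | some (i, j), none, hab =>
      exact absurd (hab.symm ▸ hmem i j : f none ∈ L i) (hx i)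
    | some (i, j), some (i', j'), hab =>
      by_cases hii : i = i'
      · subst hii
        have := (List.Nodup.getElem_inj_iff (hL i).nodup).1 hab
        rw [Fin.ext this]
      · exact absurd (hab ▸ hmem i' j' : f (some (i, j)) ∈ L i')
          (hdisj i i' hii _ (hmem i j))

/-- Greedy simultaneous choice: if around every base set `m ∈ T` a list can be found that avoids
any prescribed small set disjoint from `m`, then the lists can be chosen pairwise disjoint. -/
lemma exists_disjoint_lists [DecidableEq V] {r K : ℕ} (x : V) (P : List V → Prop)
    (T : Finset (Finset V))
    (hcard : ∀ m ∈ T, m.card ≤ 2) (hdisj : (T : Set (Finset V)).PairwiseDisjoint id)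
    (hx : ∀ m ∈ T, x ∉ m)
    (hP : ∀ l, P l → l.length = r) (hK : T.card * (r + 2) + 1 ≤ K)
    (h : ∀ m ∈ T, ∀ F : Finset V, F.card ≤ K → x ∈ F → Disjoint F m →
      ∃ l, P l ∧ ∀ c ∈ l, c ∉ F) :
    ∃ L : Finset V → List V, (∀ m ∈ T, P (L m) ∧ x ∉ L m) ∧
      ∀ m ∈ T, ∀ m' ∈ T, m ≠ m' → ∀ c ∈ L m, c ∉ L m' := by
  suffices H : ∀ T' ⊆ T, ∃ L : Finset V → List V, (∀ m ∈ T', P (L m) ∧ x ∉ L m) ∧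
      (∀ m ∈ T', ∀ m' ∈ T', m ≠ m' → ∀ c ∈ L m, c ∉ L m') ∧
      ∀ m ∈ T', ∀ m' ∈ T, m ≠ m' → ∀ c ∈ L m, c ∉ m' by
    obtain ⟨L, h1, h2, -⟩ := H T subset_rfl
    exact ⟨L, h1, h2⟩
  intro T'
  induction T' using Finset.induction_on with
  | empty => intro _; exact ⟨fun _ => [], by simp⟩
  | insert m₀ T' hm₀ ih =>
    intro hT
    obtain ⟨L, h1, h2, h3⟩ := ih ((Finset.subset_insert _ _).trans hT)
    have hm₀T : m₀ ∈ T := hT (Finset.mem_insert_self _ _)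
    have hT' : T' ⊆ T := (Finset.subset_insert _ _).trans hT
    let F : Finset V := insert x ((T.erase m₀).biUnion id ∪ T'.biUnion fun m => (L m).toFinset)
    have hF : F.card ≤ K := by
      have a1 : ((T.erase m₀).biUnion id).card ≤ T.card * 2 :=
        (Finset.card_biUnion_le_card_mul _ _ 2 fun m hm =>
          hcard m (Finset.mem_of_mem_erase hm)).trans
          (Nat.mul_le_mul_right _ (Finset.card_le_card (Finset.erase_subset _ _)))
      have a2 : (T'.biUnion fun m => (L m).toFinset).card ≤ T.card * r :=
        (Finset.card_biUnion_le_card_mul _ _ r fun m hm =>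
          (List.toFinset_card_le _).trans (hP _ (h1 m hm).1).le).trans
          (Nat.mul_le_mul_right _ (Finset.card_le_card hT'))
      have a3 := Finset.card_insert_le x
        ((T.erase m₀).biUnion id ∪ T'.biUnion fun m => (L m).toFinset)
      have a4 := Finset.card_union_le ((T.erase m₀).biUnion id)
        (T'.biUnion fun m => (L m).toFinset)
      have a5 : T.card * (r + 2) = T.card * 2 + T.card * r := by ring
      exact a3.trans (by omega)
    have hFd : Disjoint F m₀ := by
      rw [Finset.disjoint_left]
      intro c hc hcm
      simp only [F, Finset.mem_insert, Finset.mem_union, Finset.mem_biUnion, id,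
        List.mem_toFinset, Finset.mem_erase] at hc
      rcases hc with rfl | ⟨m, ⟨hne, hm⟩, hcm'⟩ | ⟨m, hm, hcm'⟩
      · exact hx _ hm₀T hcm
      · exact Finset.disjoint_left.1 (hdisj hm hm₀T hne) hcm' hcm
      · exact h3 m hm m₀ hm₀T (fun h => hm₀ (h ▸ hm)) c hcm' hcm
    obtain ⟨l, hl, hlF⟩ := h m₀ hm₀T F hF (Finset.mem_insert_self _ _) hFd
    have hlx : x ∉ l := fun hxl => hlF x hxl (Finset.mem_insert_self _ _)
    have hlL : ∀ m ∈ T', ∀ c ∈ l, c ∉ L m := fun m hm c hc hc' => hlF c hc (by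
      simp only [F, Finset.mem_insert, Finset.mem_union, Finset.mem_biUnion, List.mem_toFinset]
      exact Or.inr (Or.inr ⟨m, hm, hc'⟩))
    have hlB : ∀ m ∈ T, m₀ ≠ m → ∀ c ∈ l, c ∉ m := fun m hm hne c hc hc' => hlF c hc (by
      simp only [F, Finset.mem_insert, Finset.mem_union, Finset.mem_biUnion, id,
        Finset.mem_erase]
      exact Or.inr (Or.inl ⟨m, ⟨hne.symm, hm⟩, hc'⟩))
    have hne : ∀ m ∈ T', m ≠ m₀ := fun m hm h => hm₀ (h ▸ hm)
    refine ⟨Function.update L m₀ l, ?_, ?_, ?_⟩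
    · intro m hm
      rcases Finset.mem_insert.1 hm with rfl | hm
      · simpa using ⟨hl, hlx⟩
      · simpa [hne m hm] using h1 m hm
    · intro m hm m' hm' hmm
      rcases Finset.mem_insert.1 hm with rfl | hm1 <;>
        rcases Finset.mem_insert.1 hm' with rfl | hm1'
      · exact absurd rfl hmm
      · simpa [hne m' hm1'] using hlL m' hm1'
      · simp only [Function.update_self, Function.update_of_ne (hne m hm1)]
        exact fun c hc hc' => hlL m hm1 c hc' hc
      · simpa [hne m hm1, hne m' hm1'] using h2 m hm1 m' hm1' hmm
    · intro m hm m' hm' hmm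
      rcases Finset.mem_insert.1 hm with rfl | hm
      · simpa using hlB m' hm' hmm
      · simpa [hne m hm] using h3 m hm m' hm' hmm

/-- What a set `A` of well-connected vertices has to satisfy for greedy cycle building through `x`:
even after deleting any `K` vertices, each of its members keeps a neighbour in `A` across the
partition, and each member on the side of `x` keeps a common such neighbour with `x`. -/
structure WellConnected (G : SimpleGraph V) (S A : Set V) (x : V) (K : ℕ) : Prop where
  step : ∀ p ∈ A, ∀ F : Finset V, F.card ≤ K → ∃ c ∉ F, c ∈ A ∧ (crossGraph G S).Adj p c
  meet : ∀ p ∈ A, (p ∈ S ↔ x ∈ S) → ∀ F : Finset V, F.card ≤ K →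
    ∃ c ∉ F, c ∈ A ∧ (crossGraph G S).Adj p c ∧ (crossGraph G S).Adj x c

/-- From `p` on the side of `x`, a path of odd length `2 * t + 1` zigzags across the partition and
ends in a neighbour of `x`. -/
lemma exists_zigzag [DecidableEq V] {G : SimpleGraph V} {S A : Set V} {x : V} {K : ℕ}
    (hA : WellConnected G S A x K) (t : ℕ) : ∀ p ∈ A, (p ∈ S ↔ x ∈ S) →
    ∀ F : Finset V, F.card + 2 * t ≤ K → ∃ l : List V, l.length = 2 * t + 1 ∧
      (p :: l).IsChain G.Adj ∧ l.Nodup ∧ (∀ c ∈ l, c ∉ F) ∧ ∀ y ∈ l.getLast?, G.Adj y x := by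
  induction t with
  | zero =>
    intro p hp hpx F hF
    obtain ⟨c, hcF, -, hpc, hxc⟩ := hA.meet p hp hpx F (by omega)
    exact ⟨[c], rfl, by simpa using hpc.1, by simp, by simpa using hcF,
      by simpa using hxc.1.symm⟩
  | succ t ih =>
    intro p hp hpx F hF
    obtain ⟨c, hcF, hc, hpc⟩ := hA.step p hp F (by omega)
    have b1 := Finset.card_insert_le c F
    obtain ⟨d, hdF, hd, hcd⟩ := hA.step c hc (insert c F) (by omega)
    have b2 := Finset.card_insert_le d (insert c F)
    have hdx : d ∈ S ↔ x ∈ S := by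
      have e1 := hpc.2
      have e2 := hcd.2
      tauto
    obtain ⟨l, hlen, hch, hnd, hlF, hlast⟩ := ih d hd hdx (insert d (insert c F)) (by omega)
    simp only [Finset.mem_insert, not_or] at hlF hdF
    refine ⟨c :: d :: l, by simp [hlen]; omega, ?_, ?_, ?_, ?_⟩
    · simp only [List.isChain_cons_cons]
      exact ⟨hpc.1, hcd.1, hch⟩
    · simp only [List.nodup_cons, List.mem_cons, not_or]
      exact ⟨⟨fun h => hdF.1 h.symm, fun h => (hlF _ h).2.1 rfl⟩,
        fun h => (hlF _ h).1 rfl, hnd⟩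
    · intro y hy
      simp only [List.mem_cons] at hy
      rcases hy with rfl | rfl | hy
      · exact hcF
      · exact hdF.2
      · exact (hlF y hy).2.2
    · have hne : l ≠ [] := by rintro rfl; simp at hlen
      obtain ⟨e, l', rfl⟩ := List.exists_cons_of_ne_nil hne
      simpa using hlast

/-- The bases of petals at `x`, i.e. the part of an edge inside a class that has to be reserved in
advance: the far end of such an edge at `x`, or both ends of such an edge that either lies on the
side of `x` or has an end adjacent to `x`. -/
def IsBase (G : SimpleGraph V) (S A : Set V) (x : V) (m : Finset V) : Prop :=
  (∃ a ∈ A, (ownGraph G S).Adj x a ∧ (m : Set V) = {a}) ∨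
  ∃ u ∈ A, ∃ v ∈ A, (ownGraph G S).Adj u v ∧ x ≠ u ∧ x ≠ v ∧ (m : Set V) = {u, v} ∧
    ((u ∈ S ↔ x ∈ S) ∨ (¬ (u ∈ S ↔ x ∈ S) ∧ G.Adj x u))

lemma exists_petal [DecidableEq V] {G : SimpleGraph V} {S A : Set V} {x : V} {K t : ℕ}
    (hA : WellConnected G S A x (K + 2 * t + 5)) {m : Finset V} (hm : IsBase G S A x m)
    (F : Finset V) (hF : F.card ≤ K) (hFm : Disjoint F m) :
    ∃ l, IsPetal G x (2 * t + 4) l ∧ ∀ c ∈ l, c ∉ F := by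
  have hmF : ∀ c ∈ (m : Set V), c ∉ F := fun c hc hc' => Finset.disjoint_left.1 hFm hc' hc
  rcases hm with ⟨a, ha, hxa, hma⟩ | ⟨u, hu, v, hv, huv, hxu, hxv, hmuv, hcase⟩
  · rw [hma] at hmF
    have haF := hmF a (by simp)
    have b1 := Finset.card_insert_le a F
    obtain ⟨l, hlen, hch, hnd, hlF, hlast⟩ :=
      exists_zigzag hA (t + 1) a ha hxa.2.symm (insert a F) (by omega)
    simp only [Finset.mem_insert, not_or] at hlF
    have hne : l ≠ [] := by rintro rfl; simp at hlen
    obtain ⟨e, l', rfl⟩ := List.exists_cons_of_ne_nil hne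
    refine ⟨a :: e :: l', ⟨by simp at hlen ⊢; omega, ?_, ?_, by simpa using hlast⟩, ?_⟩
    · exact List.isChain_cons_cons.2 ⟨hxa.1, hch⟩
    · exact List.nodup_cons.2 ⟨fun h => (hlF _ h).1 rfl, hnd⟩
    · intro y hy
      rcases List.mem_cons.1 hy with rfl | hy
      · exact haF
      · exact (hlF y hy).2
  · rw [hmuv] at hmF
    have huF := hmF u (by simp)
    have hvF := hmF v (by simp)
    have b1 := Finset.card_insert_le v F
    have b2 := Finset.card_insert_le u (insert v F)
    rcases hcase with hux | ⟨hux, hxu'⟩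
    -- the petal starts `x, w, u, v` with `w` across
    · obtain ⟨w, hwF, hw, huw, hxw⟩ := hA.meet u hu hux (insert u (insert v F)) (by omega)
      have b3 := Finset.card_insert_le w (insert u (insert v F))
      obtain ⟨l, hlen, hch, hnd, hlF, hlast⟩ :=
        exists_zigzag hA t v hv (huv.2.symm.trans hux) (insert w (insert u (insert v F))) (by omega)
      simp only [Finset.mem_insert, not_or] at hlF hwF
      have hne : l ≠ [] := by rintro rfl; simp at hlen
      obtain ⟨e, l', rfl⟩ := List.exists_cons_of_ne_nil hne
      refine ⟨w :: u :: v :: e :: l', ⟨by simp at hlen ⊢; omega, ?_, ?_, by simpa using hlast⟩, ?_⟩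
      · exact List.isChain_cons_cons.2 ⟨hxw.1, List.isChain_cons_cons.2 ⟨huw.1.symm,
          List.isChain_cons_cons.2 ⟨huv.1, hch⟩⟩⟩
      · have huv' := huv.1.ne
        refine List.nodup_cons.2 ⟨?_, List.nodup_cons.2 ⟨?_, List.nodup_cons.2 ⟨?_, hnd⟩⟩⟩
        · intro h
          rcases List.mem_cons.1 h with h | h
          · exact hwF.1 h
          rcases List.mem_cons.1 h with h | h
          · exact hwF.2.1 h
          exact (hlF _ h).1 rfl
        · intro h
          rcases List.mem_cons.1 h with h | h
          · exact huv' h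
          exact (hlF _ h).2.1 rfl
        · exact fun h => (hlF _ h).2.2.1 rfl
      · intro y hy
        rcases List.mem_cons.1 hy with rfl | hy
        · exact hwF.2.2
        rcases List.mem_cons.1 hy with rfl | hy
        · exact huF
        rcases List.mem_cons.1 hy with rfl | hy
        · exact hvF
        exact (hlF y hy).2.2.2
    -- the petal starts `x, u, v, w` with `w` back on the side of `x`
    · obtain ⟨w, hwF, hw, hvw⟩ := hA.step v hv (insert u (insert v F)) (by omega)
      have b3 := Finset.card_insert_le w (insert u (insert v F))
      have hwx : w ∈ S ↔ x ∈ S := by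
        have e1 := huv.2
        have e2 := hvw.2
        tauto
      obtain ⟨l, hlen, hch, hnd, hlF, hlast⟩ :=
        exists_zigzag hA t w hw hwx (insert w (insert u (insert v F))) (by omega)
      simp only [Finset.mem_insert, not_or] at hlF hwF
      have hne : l ≠ [] := by rintro rfl; simp at hlen
      obtain ⟨e, l', rfl⟩ := List.exists_cons_of_ne_nil hne
      refine ⟨u :: v :: w :: e :: l', ⟨by simp at hlen ⊢; omega, ?_, ?_, by simpa using hlast⟩, ?_⟩
      · exact List.isChain_cons_cons.2 ⟨hxu', List.isChain_cons_cons.2 ⟨huv.1,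
          List.isChain_cons_cons.2 ⟨hvw.1, hch⟩⟩⟩
      · have huv' := huv.1.ne
        refine List.nodup_cons.2 ⟨?_, List.nodup_cons.2 ⟨?_, List.nodup_cons.2 ⟨?_, hnd⟩⟩⟩
        · intro h
          rcases List.mem_cons.1 h with h | h
          · exact huv' h
          rcases List.mem_cons.1 h with h | h
          · exact hwF.1 h.symm
          exact (hlF _ h).2.1 rfl
        · intro h
          rcases List.mem_cons.1 h with h | h
          · exact hwF.2.1 h.symm
          exact (hlF _ h).2.2.1 rfl
        · exact fun h => (hlF _ h).1 rfl
      · intro y hy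
        rcases List.mem_cons.1 hy with rfl | hy
        · exact huF
        rcases List.mem_cons.1 hy with rfl | hy
        · exact hvF
        rcases List.mem_cons.1 hy with rfl | hy
        · exact hwF.2.2
        exact (hlF y hy).2.2.2

/-- In a `C_{k,q}`-free graph there are fewer than `k` disjoint bases at any well-connected `x`. -/
lemma card_bases_lt [DecidableEq V] {G : SimpleGraph V} {S A : Set V} {x : V} {k q K : ℕ}
    (hq : 5 ≤ q) (hqodd : Odd q) (hfree : ¬ ContainsCopy (Ckq k q) G)
    (hK : k * (q + 1) + q + 1 ≤ K) (hA : WellConnected G S A x K)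
    (T : Finset (Finset V)) (hT : ∀ m ∈ T, IsBase G S A x m)
    (hdisj : (T : Set (Finset V)).PairwiseDisjoint id) : T.card < k := by
  by_contra! hcon
  obtain ⟨T', hT'T, hT'k⟩ := Finset.exists_subset_card_eq hcon
  obtain ⟨s, hs⟩ := hqodd
  obtain ⟨t, rfl⟩ : ∃ t, q = 2 * t + 5 := ⟨s - 2, by omega⟩
  have hA' : WellConnected G S A x (k * (2 * t + 5 + 1) + 1 + 2 * t + 5) :=
    ⟨fun p hp F hF => hA.step p hp F (by omega),
      fun p hp hpx F hF => hA.meet p hp hpx F (by omega)⟩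
  have hcard : ∀ m ∈ T', m.card ≤ 2 := by
    intro m hm
    rcases hT m (hT'T hm) with ⟨a, -, -, h⟩ | ⟨u, -, v, -, -, -, -, h, -⟩
    · rw [← Set.ncard_coe_finset, h]; simp
    · rw [← Set.ncard_coe_finset, h]
      exact (Set.ncard_insert_le u {v}).trans (by simp)
  have hx : ∀ m ∈ T', x ∉ m := by
    intro m hm hxm
    have hxm' : x ∈ (m : Set V) := hxm
    rcases hT m (hT'T hm) with ⟨a, -, hxa, h⟩ | ⟨u, -, v, -, -, hu, hv, h, -⟩
    · rw [h] at hxm'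
      exact hxa.1.ne hxm'
    · rw [h] at hxm'
      rcases hxm' with h | h
      · exact hu h
      · exact hv h
  obtain ⟨L, hL, hLd⟩ := exists_disjoint_lists (K := k * (2 * t + 5 + 1) + 1) x
    (IsPetal G x (2 * t + 4)) T' hcard
    (hdisj.subset (Finset.coe_subset.2 hT'T)) hx (fun l hl => hl.length_eq)
    (by rw [hT'k]) (fun m hm F hF _ hFm => exists_petal hA' (hT m (hT'T hm)) F hF hFm)
  let e := (T'.equivFinOfCardEq hT'k).symm
  refine hfree (containsCopy_of_petals hq x (fun i => L (e i))
    (fun i => (hL _ (e i).2).1) (fun i => (hL _ (e i).2).2) ?_)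
  intro i j hij
  exact hLd _ (e i).2 _ (e j).2 fun h => hij (e.injective (Subtype.ext h))

end Embedding

/-! ### Counting edges inside the classes -/

section Counting

open Classical

variable {V : Type*} [Fintype V]

/-- The vertices on the other side of the partition that are not adjacent to `x`. -/
noncomputable def missing (G : SimpleGraph V) (S : Set V) (x : V) : Finset V :=
  Finset.univ.filter fun w => ¬ (w ∈ S ↔ x ∈ S) ∧ ¬ G.Adj x w

/-- The vertices on the other side of the partition. -/
noncomputable def otherSide (S : Set V) (x : V) : Finset V :=
  Finset.univ.filter fun w => ¬ (w ∈ S ↔ x ∈ S)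

lemma degree_own_add_cross (G : SimpleGraph V) (S : Set V) (v : V) :
    (ownGraph G S).degree v + (crossGraph G S).degree v = G.degree v := by
  rw [← SimpleGraph.card_neighborFinset_eq_degree, ← SimpleGraph.card_neighborFinset_eq_degree,
    ← SimpleGraph.card_neighborFinset_eq_degree, ← Finset.card_union_of_disjoint]
  · congr 1
    ext w
    simp only [Finset.mem_union, SimpleGraph.mem_neighborFinset, ownGraph_adj, crossGraph_adj]
    tauto
  · rw [Finset.disjoint_left]
    intro w h1 h2
    simp only [SimpleGraph.mem_neighborFinset] at h1 h2
    exact h2.2 h1.2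

lemma degree_cross_add_missing (G : SimpleGraph V) (S : Set V) (v : V) :
    (crossGraph G S).degree v + (missing G S v).card = (otherSide S v).card := by
  rw [← SimpleGraph.card_neighborFinset_eq_degree, ← Finset.card_union_of_disjoint]
  · congr 1
    ext w
    simp only [Finset.mem_union, SimpleGraph.mem_neighborFinset, crossGraph_adj, missing,
      otherSide, Finset.mem_filter, Finset.mem_univ, true_and]
    tauto
  · rw [Finset.disjoint_left]
    intro w h1 h2
    simp only [SimpleGraph.mem_neighborFinset, missing, Finset.mem_filter] at h1 h2
    exact h2.2.2 h1.1

lemma sum_otherSide_le (S : Set V) :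
    ∑ v : V, (otherSide S v).card ≤ 2 * (Fintype.card V ^ 2 / 4) := by
  set A : Finset V := Finset.univ.filter fun w => w ∈ S with hA
  have h1 : ∀ v ∈ A, (otherSide S v).card = Aᶜ.card := by
    intro v hv
    congr 1
    ext w
    simp [hA] at hv
    simp [otherSide, hA, hv]
  have h2 : ∀ v ∈ Aᶜ, (otherSide S v).card = A.card := by
    intro v hv
    congr 1
    ext w
    simp [hA] at hv
    simp [otherSide, hA, hv]
  rw [← Finset.sum_add_sum_compl A, Finset.sum_congr rfl h1, Finset.sum_congr rfl h2]
  simp only [Finset.sum_const, smul_eq_mul]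
  have h3 : A.card + Aᶜ.card = Fintype.card V := Finset.card_add_card_compl A
  rw [← h3]
  have : A.card * Aᶜ.card ≤ (A.card + Aᶜ.card) ^ 2 / 4 := by
    rw [Nat.le_div_iff_mul_le (by norm_num)]
    zify
    nlinarith [sq_nonneg ((A.card : ℤ) - Aᶜ.card)]
  nlinarith [this]

/-- If `G` has at least `⌊n²/4⌋ + c` edges, then the edges inside the classes compensate for all
missing crossing edges and exceed them by `c` (both counted twice). -/
lemma missing_le_own (G : SimpleGraph V) (S : Set V) (c : ℕ)
    (h : Fintype.card V ^ 2 / 4 + c ≤ G.edgeSet.ncard) :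
    2 * c + ∑ v, (missing G S v).card ≤ ∑ v, (ownGraph G S).degree v := by
  have h1 : ∑ v, G.degree v = 2 * G.edgeSet.ncard := by
    rw [SimpleGraph.sum_degrees_eq_twice_card_edges, ← SimpleGraph.coe_edgeFinset,
      Set.ncard_coe_finset]
  have h2 := sum_otherSide_le S
  simp only [← degree_cross_add_missing G S, Finset.sum_add_distrib] at h2
  simp only [← degree_own_add_cross G S, Finset.sum_add_distrib] at h1
  omega

/-- A matching of `H`, stored as a finset of two-element vertex sets. -/
def IsMatchingFamily {W : Type*} (H : SimpleGraph W) (M : Finset (Finset W)) : Prop :=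
  (∀ m ∈ M, ∃ u v, H.Adj u v ∧ m = {u, v}) ∧ (M : Set (Finset W)).PairwiseDisjoint id

lemma exists_maximal_matchingFamily (H : SimpleGraph V) :
    ∃ M, IsMatchingFamily H M ∧
      ∀ u v, H.Adj u v → u ∈ M.biUnion id ∨ v ∈ M.biUnion id := by
  have hne : (Finset.univ.filter fun M => IsMatchingFamily H M).Nonempty :=
    ⟨∅, Finset.mem_filter.2 ⟨Finset.mem_univ _, by simp [IsMatchingFamily]⟩⟩
  obtain ⟨M, hM, hmax⟩ := Finset.exists_max_image _ Finset.card hne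
  simp only [Finset.mem_filter, Finset.mem_univ, true_and] at hM hmax
  refine ⟨M, hM, fun u v huv => ?_⟩
  by_contra! hcon
  simp only [Finset.mem_biUnion, id, not_exists, not_and] at hcon
  have hnot : ({u, v} : Finset V) ∉ M := fun h => hcon.1 _ h (by simp)
  have hins : IsMatchingFamily H (insert {u, v} M) := by
    constructor
    · intro m hm
      rcases Finset.mem_insert.1 hm with rfl | hm
      · exact ⟨u, v, huv, rfl⟩
      · exact hM.1 m hm
    · rw [Finset.coe_insert]
      refine hM.2.insert fun m hm _ => ?_
      simp only [id, Finset.disjoint_left, Finset.mem_insert, Finset.mem_singleton]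
      rintro c (rfl | rfl)
      · exact hcon.1 m hm
      · exact hcon.2 m hm
  have := hmax _ hins
  rw [Finset.card_insert_of_notMem hnot] at this
  omega

lemma card_cover {W : Type*} {H : SimpleGraph W} {M : Finset (Finset W)} (hM : IsMatchingFamily H M) :
    (M.biUnion id).card = 2 * M.card := by
  rw [Finset.card_biUnion fun m hm m' hm' hne => hM.2 hm hm' hne, Finset.sum_const_nat (m := 2)]
  · ring
  · intro m hm
    obtain ⟨u, v, huv, rfl⟩ := hM.1 m hm
    exact Finset.card_pair huv.ne

/-- Counting degrees over a vertex cover `C`: an edge leaving `C` contributes its two incidences to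
its end in `C`, an edge inside `C` contributes one to each end. -/
lemma sum_degree_eq_of_cover (H : SimpleGraph V) (C : Finset V)
    (hC : ∀ u v, H.Adj u v → u ∈ C ∨ v ∈ C) :
    ∑ v, (H.degree v : ℤ) =
      ∑ x ∈ C, (2 * (H.degree x : ℤ) - ((H.neighborFinset x ∩ C).card : ℤ)) := by
  have h1 : ∀ v ∈ Cᶜ, H.degree v = (Finset.bipartiteBelow H.Adj C v).card := by
    intro v hv
    rw [← SimpleGraph.card_neighborFinset_eq_degree]
    congr 1
    ext w
    simp only [SimpleGraph.mem_neighborFinset, Finset.bipartiteBelow, Finset.mem_filter]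
    constructor
    · intro h
      exact ⟨(hC v w h).resolve_left (Finset.mem_compl.1 hv), h.symm⟩
    · exact fun h => h.2.symm
  have h2 : ∀ x ∈ C, (H.degree x : ℤ) - ((H.neighborFinset x ∩ C).card : ℤ) =
      ((Finset.bipartiteAbove H.Adj Cᶜ x).card : ℤ) := by
    intro x _
    rw [← SimpleGraph.card_neighborFinset_eq_degree,
      ← Finset.card_inter_add_card_sdiff (H.neighborFinset x) C]
    have : H.neighborFinset x \ C = Finset.bipartiteAbove H.Adj Cᶜ x := by
      ext w
      simp [Finset.bipartiteAbove, and_comm]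
    rw [this]
    push_cast
    ring
  have h3 := Finset.sum_card_bipartiteAbove_eq_sum_card_bipartiteBelow (s := C) (t := Cᶜ) H.Adj
  rw [← Finset.sum_add_sum_compl C]
  have h4 : ∑ v ∈ Cᶜ, (H.degree v : ℤ) =
      ∑ x ∈ C, ((H.degree x : ℤ) - ((H.neighborFinset x ∩ C).card : ℤ)) := by
    rw [Finset.sum_congr rfl h2]
    have h5 : ∑ v ∈ Cᶜ, H.degree v = ∑ x ∈ C, (Finset.bipartiteAbove H.Adj Cᶜ x).card := by
      rw [h3]
      exact Finset.sum_congr rfl h1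
    exact_mod_cast h5
  rw [h4, ← Finset.sum_add_distrib]
  exact Finset.sum_congr rfl fun x _ => by ring

/-- The extremal core. If no vertex carries `k` disjoint bases, then a vertex `x` of degree `d`
inside its class, with `z` usable matching edges away from its neighbourhood, has `d + z ≤ k - 1`.
Summed over a maximal matching, this leaves too few edges as soon as the matching has edges in
both classes. -/
lemma no_edges_on_both_sides (G : SimpleGraph V) (S : Set V) (k : ℕ) (hk : 1 ≤ k)
    (hbase : ∀ x, ∀ T : Finset (Finset V), (∀ m ∈ T, IsBase G S Set.univ x m) →
      (T : Set (Finset V)).PairwiseDisjoint id → T.card < k)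
    (hD : 2 * (k - 1) ^ 2 + ∑ v, (missing G S v).card ≤ ∑ v, (ownGraph G S).degree v)
    (h0 : ∃ u v, (ownGraph G S).Adj u v ∧ u ∈ S)
    (h1 : ∃ u v, (ownGraph G S).Adj u v ∧ u ∉ S) : False := by
  set H := ownGraph G S with hH
  obtain ⟨M, hM, hmax⟩ := exists_maximal_matchingFamily H
  set C := M.biUnion id with hC
  have hside : ∀ m ∈ M, ∀ a ∈ m, ∀ b ∈ m, (a ∈ S ↔ b ∈ S) := by
    intro m hm a ha b hb
    obtain ⟨u, v, huv, rfl⟩ := hM.1 m hm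
    have := huv.2
    simp only [Finset.mem_insert, Finset.mem_singleton] at ha hb
    rcases ha with rfl | rfl <;> rcases hb with rfl | rfl <;> tauto
  -- matching edges without a neighbour of `x` inside the class of `x`, usable or not for a petal
  let Z : V → Finset (Finset V) := fun x =>
    M.filter fun m => Disjoint m (H.neighborFinset x) ∧ ¬ m ⊆ missing G S x
  let Y : V → Finset (Finset V) := fun x => M.filter fun m => m ⊆ missing G S x
  have hZ : ∀ x, H.degree x + (Z x).card ≤ k - 1 := by
    intro x
    have hdj : Disjoint ((H.neighborFinset x).image fun a => ({a} : Finset V)) (Z x) := by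
      rw [Finset.disjoint_left]
      intro m hm hm'
      obtain ⟨a, ha, rfl⟩ := Finset.mem_image.1 hm
      have := (Finset.mem_filter.1 hm').2.1
      exact Finset.disjoint_left.1 this (Finset.mem_singleton_self a) ha
    have hlt := hbase x (((H.neighborFinset x).image fun a => ({a} : Finset V)) ∪ Z x) ?_ ?_
    · rw [Finset.card_union_of_disjoint hdj,
        Finset.card_image_of_injective _ Finset.singleton_injective,
        SimpleGraph.card_neighborFinset_eq_degree] at hlt
      omega
    · intro m hm
      rcases Finset.mem_union.1 hm with hm | hm
      · obtain ⟨a, ha, rfl⟩ := Finset.mem_image.1 hm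
        exact Or.inl ⟨a, Set.mem_univ _, (SimpleGraph.mem_neighborFinset _ _ _).1 ha, by simp⟩
      · obtain ⟨hmM, hdis, hnm⟩ := Finset.mem_filter.1 hm
        obtain ⟨w, hw, hwm⟩ := Finset.not_subset.1 hnm
        -- orient the edge so that its end outside `missing G S x` comes first
        obtain ⟨w', hww', hmw⟩ : ∃ w', H.Adj w w' ∧ m = {w, w'} := by
          obtain ⟨u, v, huv, rfl⟩ := hM.1 m hmM
          simp only [Finset.mem_insert, Finset.mem_singleton] at hw
          rcases hw with rfl | rfl
          · exact ⟨v, huv, rfl⟩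
          · exact ⟨u, huv.symm, Finset.pair_comm _ _⟩
        have hn : ∀ c ∈ m, ¬ H.Adj x c := fun c hc hxc =>
          Finset.disjoint_left.1 hdis hc ((SimpleGraph.mem_neighborFinset _ _ _).2 hxc)
        refine Or.inr ⟨w, Set.mem_univ _, w', Set.mem_univ _, hww', ?_, ?_, by simp [hmw], ?_⟩
        · rintro rfl
          exact hn w' (by simp [hmw]) hww'
        · rintro rfl
          exact hn w (by simp [hmw]) hww'.symm
        · simp only [missing, Finset.mem_filter, Finset.mem_univ, true_and] at hwm
          tauto
    · rw [Finset.coe_union]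
      refine Set.pairwiseDisjoint_union.2 ⟨?_, hM.2.subset ?_, ?_⟩
      · intro m hm m' hm' hne
        obtain ⟨a, -, rfl⟩ := Finset.mem_image.1 (Finset.mem_coe.1 hm)
        obtain ⟨b, -, rfl⟩ := Finset.mem_image.1 (Finset.mem_coe.1 hm')
        simp only [Function.onFun, id, Finset.disjoint_singleton]
        rintro rfl
        exact hne rfl
      · exact Finset.coe_subset.2 (Finset.filter_subset _ _)
      · intro m hm m' hm' _
        obtain ⟨a, ha, rfl⟩ := Finset.mem_image.1 (Finset.mem_coe.1 hm)
        have := (Finset.mem_filter.1 (Finset.mem_coe.1 hm')).2.1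
        simp only [id, Finset.disjoint_singleton_left]
        exact fun h => Finset.disjoint_left.1 this h ha
  have hY : ∀ x, 2 * (Y x).card ≤ (missing G S x).card := by
    intro x
    have hYM : IsMatchingFamily H (Y x) :=
      ⟨fun m hm => hM.1 m (Finset.mem_filter.1 hm).1,
        hM.2.subset (Finset.coe_subset.2 (Finset.filter_subset _ _))⟩
    rw [← card_cover hYM]
    exact Finset.card_le_card (Finset.biUnion_subset.2 fun m hm => (Finset.mem_filter.1 hm).2)
  have hI : ∀ x, M.card ≤ (H.neighborFinset x ∩ C).card + (Z x).card + (Y x).card := by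
    intro x
    let X : Finset (Finset V) := M.filter fun m => ¬ Disjoint m (H.neighborFinset x)
    have hX : X.card ≤ (H.neighborFinset x ∩ C).card := by
      calc X.card = ∑ m ∈ X, 1 := by simp
        _ ≤ ∑ m ∈ X, (m ∩ H.neighborFinset x).card := by
          refine Finset.sum_le_sum fun m hm => ?_
          have := (Finset.mem_filter.1 hm).2
          rw [Finset.not_disjoint_iff_nonempty_inter] at this
          exact this.card_pos
        _ = (X.biUnion fun m => m ∩ H.neighborFinset x).card := by
          rw [Finset.card_biUnion]
          intro m hm m' hm' hne
          exact (hM.2 (Finset.mem_filter.1 hm).1 (Finset.mem_filter.1 hm').1 hne).mono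
            Finset.inter_subset_left Finset.inter_subset_left
        _ ≤ _ := by
          refine Finset.card_le_card (Finset.biUnion_subset.2 fun m hm => ?_)
          intro c hc
          have hc' := Finset.mem_inter.1 hc
          exact Finset.mem_inter.2 ⟨hc'.2,
            Finset.mem_biUnion.2 ⟨m, (Finset.mem_filter.1 hm).1, hc'.1⟩⟩
    have hcov : M ⊆ X ∪ Z x ∪ Y x := by
      intro m hm
      simp only [X, Z, Y, Finset.mem_union, Finset.mem_filter]
      tauto
    have c1 := Finset.card_le_card hcov
    have c2 := Finset.card_union_le (X ∪ Z x) (Y x)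
    have c3 := Finset.card_union_le X (Z x)
    omega
  -- a covered vertex of `S` sees a matching edge in the other class as untouched
  obtain ⟨x, hxC, hxpos⟩ : ∃ x ∈ C, 0 < (Z x).card + (Y x).card := by
    have hfind : ∀ P : Prop, (∃ u v, H.Adj u v ∧ (u ∈ S ↔ P)) →
        ∃ m ∈ M, ∃ c ∈ m, (c ∈ S ↔ P) := by
      rintro P ⟨u, v, huv, huP⟩
      rcases hmax u v huv with h | h
      · obtain ⟨m, hm, hum⟩ := Finset.mem_biUnion.1 h
        exact ⟨m, hm, u, hum, huP⟩
      · obtain ⟨m, hm, hvm⟩ := Finset.mem_biUnion.1 h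
        exact ⟨m, hm, v, hvm, huv.2.symm.trans huP⟩
    obtain ⟨m₀, hm₀, x, hx, hxS⟩ := hfind True (by simpa using h0)
    obtain ⟨m₁, hm₁, y, hy, hyS⟩ := hfind False (by simpa using h1)
    simp only [iff_true, iff_false] at hxS hyS
    refine ⟨x, Finset.mem_biUnion.2 ⟨m₀, hm₀, hx⟩, ?_⟩
    have hdis : Disjoint m₁ (H.neighborFinset x) := by
      rw [Finset.disjoint_left]
      intro c hc hxc
      have e1 := ((SimpleGraph.mem_neighborFinset _ _ _).1 hxc).2
      have e2 := hside m₁ hm₁ c hc y hy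
      tauto
    by_cases hmm : m₁ ⊆ missing G S x
    · have : 0 < (Y x).card := Finset.card_pos.2 ⟨m₁, Finset.mem_filter.2 ⟨hm₁, hmm⟩⟩
      omega
    · have : 0 < (Z x).card := Finset.card_pos.2 ⟨m₁, Finset.mem_filter.2 ⟨hm₁, hdis, hmm⟩⟩
      omega
  have hsum := sum_degree_eq_of_cover H C hmax
  have hcardC := card_cover hM
  have hle : ∑ x ∈ C, (2 * (H.degree x : ℤ) - ((H.neighborFinset x ∩ C).card : ℤ)) ≤
      ∑ x ∈ C, ((2 * ((k : ℤ) - 1) - M.card) + ((Y x).card : ℤ) - (Z x).card) := by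
    refine Finset.sum_le_sum fun x _ => ?_
    have := hZ x
    have := hI x
    zify [hk] at *
    linarith
  have hmiss : ∑ x ∈ C, 2 * ((Y x).card : ℤ) ≤ ∑ v, ((missing G S v).card : ℤ) :=
    calc ∑ x ∈ C, 2 * ((Y x).card : ℤ) ≤ ∑ x ∈ C, ((missing G S x).card : ℤ) :=
          Finset.sum_le_sum fun x _ => by exact_mod_cast hY x
      _ ≤ _ := Finset.sum_le_sum_of_subset_of_nonneg (Finset.subset_univ _)
          fun _ _ _ => by positivity
  have hpos : (0 : ℤ) < ∑ x ∈ C, (((Z x).card : ℤ) + (Y x).card) :=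
    Finset.sum_pos' (fun _ _ => by positivity) ⟨x, hxC, by exact_mod_cast hxpos⟩
  have hD' : 2 * ((k : ℤ) - 1) ^ 2 + ∑ v, ((missing G S v).card : ℤ) ≤
      ∑ v, (H.degree v : ℤ) := by
    have : ((2 * (k - 1) ^ 2 + ∑ v, (missing G S v).card : ℕ) : ℤ) ≤
        ((∑ v, H.degree v : ℕ) : ℤ) := by exact_mod_cast hD
    push_cast [hk] at this
    exact this
  rw [← hsum, Finset.sum_sub_distrib, Finset.sum_add_distrib, Finset.sum_const, nsmul_eq_mul,
    hcardC] at hle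
  rw [Finset.sum_add_distrib] at hpos
  rw [← Finset.mul_sum] at hmiss
  push_cast at hle
  nlinarith [sq_nonneg ((k : ℤ) - 1 - M.card)]

end Counting

/-! ### Consequences of maximality of the cut and of the degree condition -/

section Dense

open Classical

variable {V : Type*} [Fintype V]

lemma crossEdges_compl {W : Type*} (G : SimpleGraph W) (S : Set W) :
    crossEdges G S Sᶜ = (crossGraph G S).edgeSet := by
  ext e
  induction e using Sym2.ind with
  | _ a b =>
    simp only [crossEdges, Set.mem_ofPred_eq, SimpleGraph.mem_edgeSet, crossGraph_adj,
      Set.mem_compl_iff]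
    constructor
    · rintro ⟨h, u, hu, v, hv, he⟩
      rcases Sym2.eq_iff.1 he with ⟨rfl, rfl⟩ | ⟨rfl, rfl⟩ <;> tauto
    · rintro ⟨h, hab⟩
      refine ⟨h, ?_⟩
      by_cases ha : a ∈ S
      · exact ⟨a, ha, b, by tauto, rfl⟩
      · exact ⟨b, by tauto, a, ha, Sym2.eq_swap⟩

/-- In a maximum cut, no vertex has more neighbours in its own class than across: otherwise moving
it to the other class would improve the cut. -/
lemma own_le_cross (G : SimpleGraph V) (S : Set V)
    (hmax : ∀ S' : Set V, edgesBetween G S' S'ᶜ ≤ edgesBetween G S Sᶜ) (x : V) :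
    (ownGraph G S).degree x ≤ (crossGraph G S).degree x := by
  let S' : Set V := {v | if v = x then v ∉ S else v ∈ S}
  have hx' : x ∈ S' ↔ x ∉ S := by simp [S']
  have hv' : ∀ v, v ≠ x → (v ∈ S' ↔ v ∈ S) := fun v hv => by simp [S', hv]
  have hle := hmax S'
  simp only [edgesBetween, crossEdges_compl] at hle
  have hsplit : ∀ X : SimpleGraph V,
      X.edgeSet.ncard = (X.edgeSet \ X.incidenceSet x).ncard + X.degree x := by
    intro X
    rw [← SimpleGraph.card_incidenceFinset_eq_degree, ← Set.ncard_coe_finset,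
      SimpleGraph.coe_incidenceFinset]
    exact (Set.ncard_sdiff_add_ncard_of_subset (X.incidenceSet_subset x) (Set.toFinite _)).symm
  have hrest : (crossGraph G S').edgeSet \ (crossGraph G S').incidenceSet x =
      (crossGraph G S).edgeSet \ (crossGraph G S).incidenceSet x := by
    ext e
    induction e using Sym2.ind with
    | _ a b =>
      simp only [Set.mem_sdiff, SimpleGraph.incidenceSet, Set.mem_ofPred_eq,
        SimpleGraph.mem_edgeSet, crossGraph_adj, Sym2.mem_iff]
      by_cases ha : a = x
      · subst ha; tauto
      by_cases hb : b = x
      · subst hb; tauto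
      rw [hv' a ha, hv' b hb]
  have hdeg : (crossGraph G S').degree x = (ownGraph G S).degree x := by
    rw [← SimpleGraph.card_neighborFinset_eq_degree, ← SimpleGraph.card_neighborFinset_eq_degree]
    congr 1
    ext w
    simp only [SimpleGraph.mem_neighborFinset, crossGraph_adj, ownGraph_adj]
    refine and_congr_right fun h => ?_
    rw [hv' w h.ne', hx']
    tauto
  rw [hsplit (crossGraph G S'), hsplit (crossGraph G S), hrest, hdeg] at hle
  omega

lemma sum_own_le (G : SimpleGraph V) (S : Set V) :
    ∑ v, (ownGraph G S).degree v ≤ 2 * (edgesIn G S + edgesIn G Sᶜ) := by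
  rw [SimpleGraph.sum_degrees_eq_twice_card_edges, ← Set.ncard_coe_finset,
    SimpleGraph.coe_edgeFinset]
  refine Nat.mul_le_mul_left 2 (le_trans (Set.ncard_le_ncard ?_ (Set.toFinite _))
    (Set.ncard_union_le _ _))
  intro e
  induction e using Sym2.ind with
  | _ a b =>
    simp only [SimpleGraph.mem_edgeSet, ownGraph_adj, inEdges, Set.mem_union, Set.mem_ofPred_eq,
      Sym2.mem_iff, Set.mem_compl_iff, forall_eq_or_imp, forall_eq]
    tauto

lemma exists_own_of_edgesIn_ne_zero {W : Type*} (G : SimpleGraph W) (S : Set W)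
    (h : edgesIn G S ≠ 0) : ∃ u v, G.Adj u v ∧ u ∈ S ∧ v ∈ S := by
  obtain ⟨e, he⟩ := Set.nonempty_of_ncard_ne_zero h
  induction e using Sym2.ind with
  | _ a b => exact ⟨a, b, he.1, he.2 a (by simp), he.2 b (by simp)⟩

/-- The vertices with fewer than `n / 25` neighbours in their own class. -/
def lowOwn (G : SimpleGraph V) (S : Set V) : Set V :=
  {v | 25 * (ownGraph G S).degree v < Fintype.card V}

/-- With few edges inside the classes, at most `n / 32` vertices fail to be in `lowOwn G S`. -/
lemma card_high_le (G : SimpleGraph V) (S : Set V)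
    (hsum : 800 * ∑ v, (ownGraph G S).degree v ≤ Fintype.card V ^ 2) :
    32 * (Finset.univ.filter fun v => v ∉ lowOwn G S).card ≤ Fintype.card V := by
  set B := Finset.univ.filter fun v => v ∉ lowOwn G S with hB
  have h1 : B.card * Fintype.card V ≤ 25 * ∑ v, (ownGraph G S).degree v := by
    calc B.card * Fintype.card V = ∑ v ∈ B, Fintype.card V := by simp
      _ ≤ ∑ v ∈ B, 25 * (ownGraph G S).degree v := by
        refine Finset.sum_le_sum fun v hv => ?_
        simpa [hB, lowOwn] using hv
      _ ≤ ∑ v, 25 * (ownGraph G S).degree v :=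
        Finset.sum_le_sum_of_subset (Finset.subset_univ _)
      _ = _ := by rw [Finset.mul_sum]
  rcases Nat.eq_zero_or_pos (Fintype.card V) with h0 | h0
  · have : B.card ≤ Fintype.card V := Finset.card_le_univ B
    omega
  · have h2 : (32 * B.card) * Fintype.card V ≤ Fintype.card V * Fintype.card V := by
      nlinarith
    exact Nat.le_of_mul_le_mul_right h2 h0

lemma wellConnected_lowOwn (G : SimpleGraph V) (S : Set V) (K : ℕ)
    (hn : 100 * K + 1000 ≤ Fintype.card V)
    (hdeg : ∀ v, Fintype.card V / 2 ≤ G.degree v)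
    (hcut : ∀ v, (ownGraph G S).degree v ≤ (crossGraph G S).degree v)
    (hsum : 800 * ∑ v, (ownGraph G S).degree v ≤ Fintype.card V ^ 2) (x : V) :
    WellConnected G S (lowOwn G S) x K := by
  have hB := card_high_le G S hsum
  set B := Finset.univ.filter fun v => v ∉ lowOwn G S with hBdef
  have hadd := degree_own_add_cross G S
  have hlow : ∀ p ∈ lowOwn G S, 23 * Fintype.card V ≤ 50 * (crossGraph G S).degree p + 25 := by
    intro p hp
    have h1 : 25 * (ownGraph G S).degree p < Fintype.card V := hp
    have h2 := hadd p
    have h3 := hdeg p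
    omega
  have hx : Fintype.card V ≤ 4 * (crossGraph G S).degree x + 1 := by
    have h1 := hadd x
    have h2 := hdeg x
    have h3 := hcut x
    omega
  have hother : ∀ v, (crossGraph G S).degree v ≤ (otherSide S v).card := fun v => by
    have := degree_cross_add_missing G S v
    omega
  -- neither side is much larger than half: a vertex of low own degree opposite to `x` sees
  -- almost `n / 2` vertices on the side of `x`
  have hsize : 50 * (otherSide S x).card ≤ 27 * Fintype.card V + 25 := by
    obtain ⟨w, hw, hwB⟩ : ∃ w ∈ otherSide S x, w ∉ B := by
      refine Finset.exists_mem_notMem_of_card_lt_card ?_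
      have := hother x
      omega
    have hwlow : w ∈ lowOwn G S := by simpa [hBdef] using hwB
    have hcompl : otherSide S w = (otherSide S x)ᶜ := by
      ext c
      simp only [otherSide, Finset.mem_filter, Finset.mem_univ, true_and,
        Finset.mem_compl] at hw ⊢
      tauto
    have h1 := Finset.card_add_card_compl (otherSide S x)
    rw [← hcompl] at h1
    have h2 := hother w
    have h3 := hlow w hwlow
    omega
  constructor
  · intro p hp F hF
    obtain ⟨c, hc, hcn⟩ : ∃ c ∈ (crossGraph G S).neighborFinset p, c ∉ F ∪ B := by
      refine Finset.exists_mem_notMem_of_card_lt_card ?_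
      rw [SimpleGraph.card_neighborFinset_eq_degree]
      have h1 := Finset.card_union_le F B
      have h2 := hlow p hp
      omega
    simp only [Finset.mem_union, not_or] at hcn
    exact ⟨c, hcn.1, by simpa [hBdef] using hcn.2, (SimpleGraph.mem_neighborFinset _ _ _).1 hc⟩
  · intro p hp hpx F hF
    obtain ⟨c, hc, hcn⟩ : ∃ c ∈ (crossGraph G S).neighborFinset p ∩
        (crossGraph G S).neighborFinset x, c ∉ F ∪ B := by
      refine Finset.exists_mem_notMem_of_card_lt_card ?_
      have h1 := Finset.card_union_le F B
      have h2 := hlow p hp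
      have h3 := Finset.card_union_add_card_inter ((crossGraph G S).neighborFinset p)
        ((crossGraph G S).neighborFinset x)
      have h4 : ((crossGraph G S).neighborFinset p ∪
          (crossGraph G S).neighborFinset x).card ≤ (otherSide S x).card := by
        refine Finset.card_le_card fun c hc => ?_
        simp only [Finset.mem_union, SimpleGraph.mem_neighborFinset, crossGraph_adj] at hc
        simp only [otherSide, Finset.mem_filter, Finset.mem_univ, true_and]
        tauto
      simp only [SimpleGraph.card_neighborFinset_eq_degree] at h3
      omega
    simp only [Finset.mem_union, not_or] at hcn
    simp only [Finset.mem_inter, SimpleGraph.mem_neighborFinset] at hc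
    exact ⟨c, hcn.1, by simpa [hBdef] using hcn.2, hc.1, hc.2⟩

/-- Freeness of `C_{k,q}` forces every vertex into `lowOwn G S`: otherwise `k` of its neighbours in
its own class start the petals of a copy. -/
lemma lowOwn_eq_univ (G : SimpleGraph V) (S : Set V) {k q K : ℕ}
    (hq : 5 ≤ q) (hqodd : Odd q) (hfree : ¬ ContainsCopy (Ckq k q) G)
    (hK : k * (q + 1) + q + 1 ≤ K) (hn : 200 * K + 1000 ≤ Fintype.card V)
    (hA : ∀ x, WellConnected G S (lowOwn G S) x K)
    (hsum : 800 * ∑ v, (ownGraph G S).degree v ≤ Fintype.card V ^ 2) :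
    lowOwn G S = Set.univ := by
  rw [Set.eq_univ_iff_forall]
  intro x
  by_contra hx
  have hB := card_high_le G S hsum
  set B := Finset.univ.filter fun v => v ∉ lowOwn G S with hBdef
  have hlt := card_bases_lt hq hqodd hfree hK (hA x)
    (((ownGraph G S).neighborFinset x \ B).image fun a => ({a} : Finset V)) ?_ ?_
  · rw [Finset.card_image_of_injective _ Finset.singleton_injective] at hlt
    have h1 := Finset.le_card_sdiff B ((ownGraph G S).neighborFinset x)
    rw [SimpleGraph.card_neighborFinset_eq_degree] at h1
    have h2 : Fintype.card V ≤ 25 * (ownGraph G S).degree x := by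
      simpa [lowOwn] using hx
    have h3 : k ≤ K := by nlinarith
    omega
  · intro m hm
    obtain ⟨a, ha, rfl⟩ := Finset.mem_image.1 hm
    obtain ⟨ha1, ha2⟩ := Finset.mem_sdiff.1 ha
    exact Or.inl ⟨a, by simpa [hBdef] using ha2,
      (SimpleGraph.mem_neighborFinset _ _ _).1 ha1, by simp⟩
  · intro m hm m' hm' hne
    obtain ⟨a, -, rfl⟩ := Finset.mem_image.1 (Finset.mem_coe.1 hm)
    obtain ⟨b, -, rfl⟩ := Finset.mem_image.1 (Finset.mem_coe.1 hm')
    simp only [Function.onFun, id, Finset.disjoint_singleton]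
    rintro rfl
    exact hne rfl

end Dense

/-- **Claim 5.** In the standard setup, `e(V₀)·e(V₁) = 0`, i.e. at least one class
spans no edge of `G`. -/
theorem one_side_spans_no_edge (k q : ℕ) (hk : 2 ≤ k) (hq : 5 ≤ q) (hqodd : Odd q) :
    ∃ N : ℕ, ∀ n : ℕ, N ≤ n → ∀ G : SimpleGraph (Fin n),
      ¬ ContainsCopy (Ckq k q) G →
      n ^ 2 / 4 + (k - 1) ^ 2 ≤ G.edgeSet.ncard →
      (∀ v, n / 2 ≤ (G.neighborSet v).ncard) →
      ∀ V₀ V₁ : Set (Fin n), V₀ ∪ V₁ = Set.univ → Disjoint V₀ V₁ →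
        (∀ W₀ W₁ : Set (Fin n), W₀ ∪ W₁ = Set.univ → Disjoint W₀ W₁ →
          edgesBetween G W₀ W₁ ≤ edgesBetween G V₀ V₁) →
        ((edgesIn G V₀ + edgesIn G V₁ : ℕ) : ℝ) < (n : ℝ) ^ 2 / 1600 →
        edgesIn G V₀ * edgesIn G V₁ = 0 := by
  classical
  refine ⟨200 * (k * (q + 1) + q + 1) + 1000, ?_⟩
  intro n hn G hfree he hdeg V₀ V₁ hunion hdisj hmax hsmall
  obtain rfl : V₁ = V₀ᶜ := (IsCompl.of_eq (Set.disjoint_iff_inter_eq_empty.1 hdisj)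
    hunion).compl_eq.symm
  have hdeg' : ∀ v, Fintype.card (Fin n) / 2 ≤ G.degree v := by
    intro v
    have := hdeg v
    rw [Fintype.card_fin]
    rwa [← SimpleGraph.coe_neighborFinset, Set.ncard_coe_finset,
      SimpleGraph.card_neighborFinset_eq_degree] at this
  have hcut := own_le_cross G V₀ fun S' =>
    hmax S' S'ᶜ (Set.union_compl_self S') disjoint_compl_right
  have hsum : 800 * ∑ v, (ownGraph G V₀).degree v ≤ Fintype.card (Fin n) ^ 2 := by
    have h1 := sum_own_le G V₀
    have h2 : 1600 * (edgesIn G V₀ + edgesIn G V₀ᶜ) < n ^ 2 := by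
      rw [lt_div_iff₀ (by norm_num)] at hsmall
      have : (((edgesIn G V₀ + edgesIn G V₀ᶜ) * 1600 : ℕ) : ℝ) < ((n ^ 2 : ℕ) : ℝ) := by
        push_cast at hsmall ⊢
        exact hsmall
      have := Nat.cast_lt.1 this
      omega
    rw [Fintype.card_fin]
    omega
  have hwell := wellConnected_lowOwn G V₀ (k * (q + 1) + q + 1)
    (by rw [Fintype.card_fin]; omega) hdeg' hcut hsum
  have huniv := lowOwn_eq_univ G V₀ hq hqodd hfree le_rfl
    (by rw [Fintype.card_fin]; omega) hwell hsum
  rw [huniv] at hwell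
  by_contra hne
  rw [mul_eq_zero, not_or] at hne
  obtain ⟨u₀, v₀, h₀, hu₀, hv₀⟩ := exists_own_of_edgesIn_ne_zero G _ hne.1
  obtain ⟨u₁, v₁, h₁, hu₁, hv₁⟩ := exists_own_of_edgesIn_ne_zero G _ hne.2
  exact no_edges_on_both_sides G V₀ k (by omega)
    (fun x T hT hTd => card_bases_lt hq hqodd hfree le_rfl (hwell x) T hT hTd)
    (missing_le_own G V₀ _ (by rwa [Fintype.card_fin]))
    ⟨u₀, v₀, ⟨h₀, iff_of_true hu₀ hv₀⟩, hu₀⟩ ⟨u₁, v₁, ⟨h₁, iff_of_false hu₁ hv₁⟩, hu₁⟩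
end

section
/- Let G be a graph with no isolated vertex such that Δ(G) ≤ 2, ν(G) = 3, and e(G) = 9. Then G is the disjoint union of three vertex-disjoint triangles. -/
/-!
Take a maximum matching `a i — b i` (`i : Fin 3`). By maximality every edge meets some matching
edge, and since `Δ ≤ 2` an edge meets at most three edges, itself included. As `9 = 3 · 3`, the
sets `touching G (a i) (b i)` have exactly three elements each and are pairwise disjoint
(`matched_degree_eq_two`, `touching_disjoint`). Hence `a i` and `b i` have further neighbours `c` and `d`
respectively, neither of which is covered by the matching. If `c ≠ d`, replacing `a i — b i` by
`c — a i` and `b i — d` gives a matching of size four; so `c = d` and each matching edge lies in a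
triangle (`exists_triangle`). The degree bound makes each triangle a component, the three
triangles are disjoint, and they contain every vertex because there are no isolated ones.
-/

open SimpleGraph

/-- The disjoint union of three vertex-disjoint triangles. -/
def threeTriangles : SimpleGraph (Fin 3 × Fin 3) :=
  SimpleGraph.fromRel (fun x y => x.1 = y.1)

section Aux

open Classical in
/-- A family of pairwise disjoint edges `x p — y p` of `G` has at most `ν(G)` members. -/
lemma card_le_nu {V ι : Type*} [Fintype V] [Fintype ι] (G : SimpleGraph V) (x y : ι → V)
    (hadj : ∀ p, G.Adj (x p) (y p))
    (hd : ∀ p q, p ≠ q → x p ≠ x q ∧ x p ≠ y q ∧ y p ≠ y q) :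
    Fintype.card ι ≤ nu G := by
  have hinj : Function.Injective (fun p => s(x p, y p)) := by
    intro p q h
    by_contra hpq
    have := hd p q hpq
    simp only [Sym2.eq_iff] at h
    tauto
  unfold nu nuSet
  apply le_csSup
  · refine ⟨Fintype.card (Sym2 V), ?_⟩
    rintro m ⟨M, -, -, rfl⟩
    exact Finset.card_le_univ M
  · refine ⟨Finset.univ.image (fun p => s(x p, y p)), ?_, ?_, ?_⟩
    · intro e
      simp only [Finset.coe_image, Finset.coe_univ, Set.image_univ, Set.mem_range]
      rintro ⟨p, rfl⟩
      exact hadj p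
    · intro e he f hf hef v hve hvf
      simp only [Finset.coe_image, Finset.coe_univ, Set.image_univ, Set.mem_range] at he hf
      obtain ⟨p, rfl⟩ := he
      obtain ⟨q, rfl⟩ := hf
      have hpq : p ≠ q := fun h => hef (by rw [h])
      have h1 := hd p q hpq
      have h2 := hd q p hpq.symm
      simp only [Sym2.mem_iff] at hve hvf
      grind
    · rw [Finset.card_image_of_injective _ hinj, Finset.card_univ]

lemma exists_matching {V : Type*} [Fintype V] (G : SimpleGraph V) (hν : nu G = 3) :
    ∃ a b : Fin 3 → V, (∀ i, G.Adj (a i) (b i)) ∧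
      ∀ i j, i ≠ j → a i ≠ a j ∧ a i ≠ b j ∧ b i ≠ b j := by
  have hmem := Nat.sSup_mem (s := {m | ∃ M : Finset (Sym2 V), ↑M ⊆ G.edgeSet ∧
    (M : Set (Sym2 V)).Pairwise (fun e f => ∀ v, v ∈ e → v ∉ f) ∧ M.card = m})
    ⟨0, ∅, by simp⟩
    ⟨Fintype.card (Sym2 V), by
      classical
      rintro m ⟨M, -, -, rfl⟩
      exact Finset.card_le_univ M⟩
  change nu G ∈ _ at hmem
  rw [hν] at hmem
  obtain ⟨M, hM, hp, hc⟩ := hmem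
  let g := M.equivFinOfCardEq hc
  have hex : ∀ i, ∃ u v, ((g.symm i : M) : Sym2 V) = s(u, v) := fun i =>
    Sym2.ind (fun u v => ⟨u, v, rfl⟩) ((g.symm i : M) : Sym2 V)
  choose a b hab using hex
  refine ⟨a, b, fun i => ?_, fun i j hij => ?_⟩
  · have := hM (g.symm i).2
    rwa [hab] at this
  · have hne : ((g.symm i : M) : Sym2 V) ≠ g.symm j := fun h =>
      hij (g.symm.injective (Subtype.ext h))
    have := hp (g.symm i).2 (g.symm j).2 hne
    rw [hab, hab] at this
    have ha := this (a i) (by simp)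
    have hb := this (b i) (by simp)
    simp only [Sym2.mem_iff] at ha hb
    tauto

/-- The edges of `G` that contain `u` or `v`. -/
def touching {V : Type*} (G : SimpleGraph V) (u v : V) : Set (Sym2 V) :=
  G.incidenceSet u ∪ G.incidenceSet v

lemma ncard_incidenceSet {V : Type*} (G : SimpleGraph V) (v : V) :
    (G.incidenceSet v).ncard = (G.neighborSet v).ncard := by
  classical
  exact Nat.card_congr (G.incidenceSetEquivNeighborSet v)

lemma ncard_touching {V : Type*} [Fintype V] (G : SimpleGraph V) {u v : V} (h : G.Adj u v) :
    (touching G u v).ncard + 1 ≤ (G.neighborSet u).ncard + (G.neighborSet v).ncard := by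
  have h1 := Set.ncard_union_add_ncard_inter (G.incidenceSet u) (G.incidenceSet v)
  have h2 : 0 < (G.incidenceSet u ∩ G.incidenceSet v).ncard :=
    (Set.ncard_pos (Set.toFinite _)).2
      ⟨s(u, v), ⟨h, by simp⟩, ⟨h, by simp⟩⟩
  rw [ncard_incidenceSet, ncard_incidenceSet] at h1
  unfold touching
  omega

/-- At degree at most two, two known neighbours are all the neighbours. -/
lemma eq_or_eq_of_adj {V : Type*} [Fintype V] (G : SimpleGraph V)
    (hΔ : ∀ v, (G.neighborSet v).ncard ≤ 2) {v x y z : V} (hx : G.Adj v x) (hy : G.Adj v y)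
    (hxy : x ≠ y) (hz : G.Adj v z) : z = x ∨ z = y := by
  by_contra! hne
  have h3 : ({x, y, z} : Set V).ncard = 3 :=
    Set.ncard_eq_three.2 ⟨x, y, z, hxy, hne.1.symm, hne.2.symm, rfl⟩
  have hsub : ({x, y, z} : Set V) ⊆ G.neighborSet v := by
    rintro w (rfl | rfl | rfl) <;> assumption
  have := Set.ncard_le_ncard hsub (Set.toFinite _)
  have := hΔ v
  omega

/-- A matching of size `ν(G) = 3` meets every edge. -/
lemma cover {V : Type*} [Fintype V] (G : SimpleGraph V) (hν : nu G = 3) {a b : Fin 3 → V}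
    (hab : ∀ i, G.Adj (a i) (b i))
    (hd : ∀ i j, i ≠ j → a i ≠ a j ∧ a i ≠ b j ∧ b i ≠ b j) {u v : V} (huv : G.Adj u v) :
    ∃ i, u = a i ∨ u = b i ∨ v = a i ∨ v = b i := by
  by_contra! hno
  have := card_le_nu G (ι := Option (Fin 3)) (fun p => p.elim u a) (fun p => p.elim v b)
    (by rintro (_ | i) <;> simp [huv, hab])
    (by
      rintro (_ | i) (_ | j) hij
      · exact absurd rfl hij
      · have := hno j
        simp only [Option.elim]
        tauto
      · have := hno i
        simp only [Option.elim]
        grind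
      · exact hd i j (by simpa using hij))
  simp [hν] at this

lemma edgeSet_subset {V : Type*} [Fintype V] (G : SimpleGraph V) (hν : nu G = 3)
    {a b : Fin 3 → V} (hab : ∀ i, G.Adj (a i) (b i))
    (hd : ∀ i j, i ≠ j → a i ≠ a j ∧ a i ≠ b j ∧ b i ≠ b j) :
    G.edgeSet ⊆ ⋃ i, touching G (a i) (b i) := by
  intro e
  induction e with
  | h u v =>
    intro he
    obtain ⟨i, hi⟩ := cover G hν hab hd he
    rw [Set.mem_iUnion]
    refine ⟨i, ?_⟩
    simp only [touching, Set.mem_union, incidenceSet, Set.mem_sep_iff, Sym2.mem_iff]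
    grind

lemma ncard_iUnion_fin_three {α : Type*} [Finite α] (N : Fin 3 → Set α) :
    (⋃ i, N i).ncard ≤ ∑ i, (N i).ncard := by
  have h : (⋃ i, N i) = N 0 ∪ N 1 ∪ N 2 := by
    ext x
    simp only [Set.mem_iUnion, Fin.exists_fin_succ, Set.mem_union]
    simp [or_assoc]
  rw [h, Fin.sum_univ_three]
  have h1 := Set.ncard_union_le (N 0 ∪ N 1) (N 2)
  have h2 := Set.ncard_union_le (N 0) (N 1)
  omega

lemma ncard_touching_le {V : Type*} [Fintype V] (G : SimpleGraph V)
    (hΔ : ∀ v, (G.neighborSet v).ncard ≤ 2) {u v : V} (h : G.Adj u v) :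
    (touching G u v).ncard ≤ 3 := by
  have h1 := ncard_touching G h
  have h2 := hΔ u
  have h3 := hΔ v
  omega

/-- The ends of a maximum matching all have degree two: otherwise one of its edges would meet
fewer than three edges, leaving fewer than nine in total. -/
lemma matched_degree_eq_two {V : Type*} [Fintype V] (G : SimpleGraph V)
    (hΔ : ∀ v, (G.neighborSet v).ncard ≤ 2) (hν : nu G = 3) (he : G.edgeSet.ncard = 9)
    {a b : Fin 3 → V} (hab : ∀ i, G.Adj (a i) (b i))
    (hd : ∀ i j, i ≠ j → a i ≠ a j ∧ a i ≠ b j ∧ b i ≠ b j) (i : Fin 3) :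
    (G.neighborSet (a i)).ncard = 2 ∧ (G.neighborSet (b i)).ncard = 2 := by
  have h1 := Set.ncard_le_ncard (edgeSet_subset G hν hab hd) (Set.toFinite _)
  have h2 := ncard_iUnion_fin_three (fun i => touching G (a i) (b i))
  have h3 := fun j => ncard_touching_le G hΔ (hab j)
  have h4 := ncard_touching G (hab i)
  have h5 := hΔ (a i)
  have h6 := hΔ (b i)
  rw [Fin.sum_univ_three] at h2
  have h7 := h3 0
  have h8 := h3 1
  have h9 := h3 2
  have h10 : 3 ≤ (touching G (a i) (b i)).ncard := by
    fin_cases i <;> simp only [Fin.zero_eta, Fin.mk_one, Fin.reduceFinMk] <;> omega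
  omega

/-- No edge meets two edges of a maximum matching: it would be counted twice, leaving at most
eight edges. -/
lemma touching_disjoint {V : Type*} [Fintype V] (G : SimpleGraph V)
    (hΔ : ∀ v, (G.neighborSet v).ncard ≤ 2) (hν : nu G = 3) (he : G.edgeSet.ncard = 9)
    {a b : Fin 3 → V} (hab : ∀ i, G.Adj (a i) (b i))
    (hd : ∀ i j, i ≠ j → a i ≠ a j ∧ a i ≠ b j ∧ b i ≠ b j) {i j : Fin 3} (hij : i ≠ j)
    {e : Sym2 V} (hi : e ∈ touching G (a i) (b i)) (hj : e ∈ touching G (a j) (b j)) : False := by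
  let N : Fin 3 → Set (Sym2 V) := fun k =>
    if k = i then touching G (a k) (b k) \ {e} else touching G (a k) (b k)
  have hsub : G.edgeSet ⊆ ⋃ k, N k := by
    intro f hf
    obtain ⟨k, hk⟩ := Set.mem_iUnion.1 (edgeSet_subset G hν hab hd hf)
    rw [Set.mem_iUnion]
    by_cases hfe : f = e
    · exact ⟨j, by simp only [N, if_neg hij.symm, hfe, hj]⟩
    · refine ⟨k, ?_⟩
      simp only [N]
      split_ifs
      · exact ⟨hk, hfe⟩
      · exact hk
  have h1 := Set.ncard_le_ncard hsub (Set.toFinite _)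
  have h2 := ncard_iUnion_fin_three N
  have h3 : ∑ k, (N k).ncard < ∑ _k : Fin 3, 3 := by
    apply Finset.sum_lt_sum
    · intro k _
      refine le_trans (Set.ncard_le_ncard ?_ (Set.toFinite _)) (ncard_touching_le G hΔ (hab k))
      simp only [N]
      split_ifs
      · exact Set.sdiff_subset
      · exact subset_rfl
    · refine ⟨i, Finset.mem_univ _, ?_⟩
      have h4 := Set.ncard_sdiff_singleton_lt_of_mem hi (Set.toFinite _)
      have h5 := ncard_touching_le G hΔ (hab i)
      simp only [N, if_true]
      omega
  simp at h3
  omega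

lemma exists_other_neighbor {V : Type*} [Fintype V] (G : SimpleGraph V) {v : V}
    (h : (G.neighborSet v).ncard = 2) (w : V) : ∃ c, G.Adj v c ∧ c ≠ w :=
  Set.exists_ne_of_one_lt_ncard (s := G.neighborSet v) (by omega) w

lemma exists_triangle {V : Type*} [Fintype V] (G : SimpleGraph V)
    (hΔ : ∀ v, (G.neighborSet v).ncard ≤ 2) (hν : nu G = 3) (he : G.edgeSet.ncard = 9)
    {a b : Fin 3 → V} (hab : ∀ i, G.Adj (a i) (b i))
    (hd : ∀ i j, i ≠ j → a i ≠ a j ∧ a i ≠ b j ∧ b i ≠ b j) (i : Fin 3) :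
    ∃ c, G.Adj (a i) c ∧ G.Adj (b i) c := by
  obtain ⟨ha, hb⟩ := matched_degree_eq_two G hΔ hν he hab hd i
  obtain ⟨c, hac, hcb⟩ := exists_other_neighbor G ha (b i)
  obtain ⟨d, hbd, hda⟩ := exists_other_neighbor G hb (a i)
  have hc : ∀ j, j ≠ i → c ≠ a j ∧ c ≠ b j := by
    intro j hji
    by_contra hcon
    refine touching_disjoint G hΔ hν he hab hd hji.symm (e := s(a i, c))
      (Or.inl ⟨hac, by simp⟩) ?_
    simp only [touching, Set.mem_union, incidenceSet, Set.mem_sep_iff, Sym2.mem_iff,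
      mem_edgeSet]
    grind
  have hd' : ∀ j, j ≠ i → d ≠ a j ∧ d ≠ b j := by
    intro j hji
    by_contra hcon
    refine touching_disjoint G hΔ hν he hab hd hji.symm (e := s(b i, d))
      (Or.inr ⟨hbd, by simp⟩) ?_
    simp only [touching, Set.mem_union, incidenceSet, Set.mem_sep_iff, Sym2.mem_iff,
      mem_edgeSet]
    grind
  by_cases hcd : c = d
  · exact ⟨c, hac, hcd ▸ hbd⟩
  exfalso
  -- The augmented matching: `b i — d` together with the old one, `b i` replaced by `c`.
  have := card_le_nu G (ι := Option (Fin 3)) (fun p => p.elim (b i) a)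
    (fun p => p.elim d (fun j => if j = i then c else b j))
    (by
      rintro (_ | j)
      · exact hbd
      · simp only [Option.elim]
        split_ifs with h
        · exact h ▸ hac
        · exact hab j)
    (by
      have hai := (hab i).ne
      rintro (_ | j) (_ | k) hjk
      · exact absurd rfl hjk
      · have h1 := hd' k
        have h2 := hd i k
        have h3 := hd k i
        simp only [Option.elim]
        grind
      · have h1 := hd' j
        have h2 := hd i j
        have h3 := hd j i
        simp only [Option.elim]
        grind
      · have hjk' : j ≠ k := by simpa using hjk
        have h1 := hd j k hjk'
        have h2 := hc j
        have h3 := hc k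
        simp only [Option.elim]
        grind)
  simp [hν] at this

end Aux

/-- If `G` has no isolated vertex, `Δ(G) ≤ 2`, `ν(G) = 3` and `e(G) = 9`, then `G` is
the disjoint union of three vertex-disjoint triangles. -/
theorem eq_three_triangles {V : Type*} [Fintype V] (G : SimpleGraph V)
    (hiso : ∀ v, ∃ w, G.Adj v w) (hΔ : ∀ v, (G.neighborSet v).ncard ≤ 2)
    (hν : nu G = 3) (he : G.edgeSet.ncard = 9) :
    Nonempty (G ≃g threeTriangles) := by
  obtain ⟨a, b, hab, hd⟩ := exists_matching G hν
  choose c hac hbc using exists_triangle G hΔ hν he hab hd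
  let f : Fin 3 × Fin 3 → V := fun p => ![a p.1, b p.1, c p.1] p.2
  have hadj : ∀ i k l, k ≠ l → G.Adj (f (i, k)) (f (i, l)) := by
    intro i k l hkl
    have h1 := hab i
    have h2 := hac i
    have h3 := hbc i
    fin_cases k <;> fin_cases l <;> first
      | exact absurd rfl hkl
      | simp [f, h1, h2, h3, h1.symm, h2.symm, h3.symm]
  -- Each triangle is closed under adjacency.
  have hnb : ∀ i k w, G.Adj (f (i, k)) w → ∃ l, l ≠ k ∧ w = f (i, l) := by
    intro i k w hw
    have key : ∀ l m, l ≠ k → m ≠ k → l ≠ m → ∃ l, l ≠ k ∧ w = f (i, l) := by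
      intro l m hl hm hlm
      rcases eq_or_eq_of_adj G hΔ (hadj i k l hl.symm) (hadj i k m hm.symm)
        (hadj i l m hlm).ne hw with h | h
      · exact ⟨l, hl, h⟩
      · exact ⟨m, hm, h⟩
    have hk : ∀ k : Fin 3, k + 1 ≠ k ∧ k + 2 ≠ k ∧ k + 1 ≠ k + 2 := by decide
    exact key (k + 1) (k + 2) (hk k).1 (hk k).2.1 (hk k).2.2
  have hcl : ∀ i k j l, f (i, k) = f (j, l) → ∀ m, ∃ n, f (j, m) = f (i, n) := by
    intro i k j l h m
    by_cases hml : l = m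
    · exact ⟨k, by rw [h, hml]⟩
    · have := hadj j l m hml
      rw [← h] at this
      obtain ⟨n, -, hn⟩ := hnb i k _ this
      exact ⟨n, hn⟩
  have hinj : Function.Injective f := by
    rintro ⟨i, k⟩ ⟨j, l⟩ h
    have hij : i = j := by
      by_contra hij
      -- Both matched vertices `a j`, `b j` would lie in triangle `i`, whose only vertex
      -- outside the matching edge `i` is `c i`.
      obtain ⟨m, hm⟩ := hcl i k j l h 0
      obtain ⟨n, hn⟩ := hcl i k j l h 1
      have h1 := hd i j hij
      have h2 := hd j i (Ne.symm hij)
      have h3 := (hab j).ne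
      fin_cases m <;> fin_cases n <;> simp [f] at hm hn <;> grind
    subst hij
    by_contra hkl
    exact (hadj i k l (fun h => hkl (by rw [h]))).ne h
  have hsurj : Function.Surjective f := by
    intro v
    obtain ⟨w, hvw⟩ := hiso v
    obtain ⟨i, h | h | h | h⟩ := cover G hν hab hd hvw
    · exact ⟨(i, 0), by simp [f, h]⟩
    · exact ⟨(i, 1), by simp [f, h]⟩
    · obtain ⟨l, -, hl⟩ := hnb i 0 v (by simpa [f, ← h] using hvw.symm)
      exact ⟨(i, l), hl.symm⟩
    · obtain ⟨l, -, hl⟩ := hnb i 1 v (by simpa [f, ← h] using hvw.symm)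
      exact ⟨(i, l), hl.symm⟩
  suffices h : ∀ p q, G.Adj (f p) (f q) ↔ threeTriangles.Adj p q from
    ⟨(RelIso.symm ⟨Equiv.ofBijective f ⟨hinj, hsurj⟩, h _ _⟩ : G ≃g threeTriangles)⟩
  rintro ⟨i, k⟩ ⟨j, l⟩
  simp only [threeTriangles, fromRel_adj]
  constructor
  · intro h
    obtain ⟨m, hm, hjl⟩ := hnb i k _ h
    have := hinj hjl
    simp only [Prod.mk.injEq] at this
    obtain ⟨rfl, rfl⟩ := this
    exact ⟨fun h => hm (by simpa using h.symm), Or.inl rfl⟩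
  · rintro ⟨hne, h⟩
    have hij : i = j := h.elim id Eq.symm
    subst hij
    exact hadj i k l (fun h => hne (by rw [h]))
end
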